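/- arXiv:0901.0907 — 2 statements merged into one kernel-verified Lean document; each statement's English description precedes it below -/
import Mathlib

section
/- (Carleson) Let {λ_i}_{i=1}^∞ be a sequence of distinct points in 𝔻. The following are equivalent: (1) there exists ε > 0 such that for every i, ∏_{j ≠ i} ρ(λ_i, λ_j) ≥ ε; (2) the sequence is interpolating for H^∞(𝔻), i.e. for every bounded sequence {w_i} of complex numbers there is a bounded analytic function φ on 𝔻 with φ(λ_i) = w_i for all i; (3) the sequence is weakly separated (there exists ε > 0 with ρ(λ_i, λ_j) ≥ ε for all i ≠ j) and the Szegő Grammian G, with entries G_{ij} = (1 − |λ_i|²)^{1/2}(1 − |λ_j|²)^{1/2}/(1 − λ_i λ̄_j), is bounded on ℓ², i.e. there is M > 0 with |∑_{i,j} a_i ā_j G_{ij}| ≤ M ∑_i |a_i|² for every finitely supported complex sequence {a_i}. -/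
open Metric Finset

/-- The pseudohyperbolic metric on the unit disk: `ρ(a,b) = |a - b| / |1 - āb|`. -/
noncomputable def pseudoHyp (a b : ℂ) : ℝ := ‖a - b‖ / ‖1 - starRingEnd ℂ a * b‖

section CI

open Filter Topology ComplexConjugate

lemma ci_key (a z : ℂ) :
    ‖1 - conj a * z‖ ^ 2 - ‖a - z‖ ^ 2 = (1 - ‖a‖ ^ 2) * (1 - ‖z‖ ^ 2) := by
  simp only [Complex.sq_norm, Complex.normSq_apply]
  simp
  ring

lemma ci_ne {a z : ℂ} (ha : ‖a‖ < 1) (hz : ‖z‖ < 1) : 1 - conj a * z ≠ 0 := by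
  intro h
  have h1 : conj a * z = 1 := (sub_eq_zero.mp h).symm
  have h2 : ‖a‖ * ‖z‖ = 1 := by
    have := congrArg norm h1
    simpa using this
  nlinarith [norm_nonneg a, norm_nonneg z]

lemma ci_pos {a z : ℂ} (ha : ‖a‖ < 1) (hz : ‖z‖ < 1) : 0 < ‖1 - conj a * z‖ :=
  norm_pos_iff.mpr (ci_ne ha hz)

/-- disk automorphism -/
noncomputable def ciPhi (a z : ℂ) : ℂ := (a - z) / (1 - conj a * z)

lemma ciPhi_norm_sq {a z : ℂ} (ha : ‖a‖ < 1) (hz : ‖z‖ < 1) :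
    1 - ‖ciPhi a z‖ ^ 2 = (1 - ‖a‖ ^ 2) * (1 - ‖z‖ ^ 2) / ‖1 - conj a * z‖ ^ 2 := by
  have h := ci_pos ha hz
  rw [ciPhi, norm_div, ← ci_key, sub_div, div_self (by positivity), div_pow]

lemma ciPhi_norm_lt {a z : ℂ} (ha : ‖a‖ < 1) (hz : ‖z‖ < 1) : ‖ciPhi a z‖ < 1 := by
  have h := ciPhi_norm_sq ha hz
  have h1 := ci_pos ha hz
  have h2 : 0 < 1 - ‖a‖ ^ 2 := by nlinarith [norm_nonneg a]
  have h3 : 0 < 1 - ‖z‖ ^ 2 := by nlinarith [norm_nonneg z]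
  have : 0 < 1 - ‖ciPhi a z‖ ^ 2 := by rw [h]; positivity
  nlinarith [norm_nonneg (ciPhi a z)]

lemma pseudoHyp_eq (z a : ℂ) : pseudoHyp z a = ‖ciPhi a z‖ := by
  rw [pseudoHyp, ciPhi, norm_div, norm_sub_rev]
  congr 1
  rw [← Complex.norm_conj]
  simp [mul_comm]

lemma pseudoHyp_symm (z a : ℂ) : pseudoHyp z a = pseudoHyp a z := by
  rw [pseudoHyp, pseudoHyp, norm_sub_rev]
  congr 1
  rw [← Complex.norm_conj]
  simp [mul_comm]

lemma ciPhi_invol {a z : ℂ} (ha : ‖a‖ < 1) (hz : ‖z‖ < 1) : ciPhi a (ciPhi a z) = z := by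
  have h := ci_ne ha hz
  have h2 := ci_ne ha (ciPhi_norm_lt ha hz)
  rw [ciPhi, div_eq_iff h2]
  rw [ciPhi]
  generalize hD : 1 - conj a * z = D at h
  field_simp
  rw [← hD]
  ring

lemma ciPhi_diff {a : ℂ} (ha : ‖a‖ < 1) : DifferentiableOn ℂ (ciPhi a) (ball 0 1) := by
  intro z hz
  have h := ci_ne ha (by simpa using hz)
  unfold ciPhi
  apply DifferentiableAt.differentiableWithinAt
  refine DifferentiableAt.fun_div (by fun_prop) (by fun_prop) h

lemma ciPhi_maps {a : ℂ} (ha : ‖a‖ < 1) : Set.MapsTo (ciPhi a) (ball 0 1) (ball 0 1) := by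
  intro z hz
  have : ‖z‖ < 1 := by simpa using hz
  simpa using ciPhi_norm_lt ha this

lemma ci_schwarz (lam : ℕ → ℂ) (hlam : ∀ i, lam i ∈ ball (0 : ℂ) 1)
    (hdist : Function.Injective lam) (M : ℝ) (F : Finset ℕ) :
    ∀ h : ℂ → ℂ, DifferentiableOn ℂ h (ball 0 1) → (∀ z ∈ ball (0 : ℂ) 1, ‖h z‖ ≤ M) →
      (∀ j ∈ F, h (lam j) = 0) →
      ∀ z ∈ ball (0 : ℂ) 1, ‖h z‖ ≤ M * ∏ j ∈ F, pseudoHyp z (lam j) := by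
  induction F using Finset.induction_on with
  | empty => intro h _ hb _ z hz; simpa using hb z hz
  | insert n F hn ih =>
    intro h hd hb h0 z hz
    set a := lam n with ha'
    have ha : ‖a‖ < 1 := by simpa using hlam n
    set f : ℂ → ℂ := h ∘ ciPhi a with hf
    have hfd : DifferentiableOn ℂ f (ball 0 1) := hd.comp (ciPhi_diff ha) (ciPhi_maps ha)
    have hf0 : f 0 = 0 := by
      have : ciPhi a 0 = a := by simp [ciPhi]
      rw [hf, Function.comp, this]
      exact h0 n (by simp)
    have hfm : Set.MapsTo f (ball 0 1) (closedBall (f 0) M) := by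
      intro w hw
      rw [hf0]
      simpa [hf] using hb _ (ciPhi_maps ha hw)
    have hfac : ∀ w ∈ ball (0 : ℂ) 1, h w = ciPhi a w * dslope f 0 (ciPhi a w) := by
      intro w hw
      have := sub_smul_dslope f 0 (ciPhi a w)
      rw [hf0] at this
      simp only [sub_zero, smul_eq_mul] at this
      rw [this, hf, Function.comp, ciPhi_invol ha (by simpa using hw)]
    have := ih (fun w => dslope f 0 (ciPhi a w)) ?_ ?_ ?_ z hz
    · rw [Finset.prod_insert hn, hfac z hz, norm_mul, pseudoHyp_eq]
      calc _ ≤ ‖ciPhi a z‖ * (M * ∏ j ∈ F, pseudoHyp z (lam j)) := by gcongr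
        _ = _ := by ring
    · have : DifferentiableOn ℂ (dslope f 0) (ball 0 1) :=
        (Complex.differentiableOn_dslope (ball_mem_nhds 0 one_pos)).mpr hfd
      exact this.comp (ciPhi_diff ha) (ciPhi_maps ha)
    · intro w hw
      have := Complex.norm_dslope_le_div_of_mapsTo_ball hfd hfm (ciPhi_maps ha hw)
      simpa using this
    · intro j hj
      have h1 := hfac _ (hlam j)
      rw [h0 j (by simp [hj])] at h1
      have h2 : ciPhi a (lam j) ≠ 0 := by
        rw [ciPhi]
        apply div_ne_zero
        · rw [sub_ne_zero]
          intro e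
          have := hdist e
          subst this; exact hn hj
        · exact ci_ne ha (by simpa using hlam j)
      rcases mul_eq_zero.mp h1.symm with h3 | h3
      · exact absurd h3 h2
      · exact h3

lemma ci_montel (f : ℕ → ℂ → ℂ) (C : ℝ) (hd : ∀ n, DifferentiableOn ℂ (f n) (ball 0 1))
    (hb : ∀ n, ∀ z ∈ ball (0 : ℂ) 1, ‖f n z‖ ≤ C) :
    ∃ g : ℂ → ℂ, DifferentiableOn ℂ g (ball 0 1) ∧ (∀ z ∈ ball (0 : ℂ) 1, ‖g z‖ ≤ C) ∧
      ∀ z ∈ ball (0 : ℂ) 1, ∀ w, (∀ᶠ n in atTop, f n z = w) → g z = w := by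
  set U : Ultrafilter ℕ := hyperfilter ℕ with hU
  have hUle : (U : Filter ℕ) ≤ atTop := Nat.hyperfilter_le_atTop
  have hlim : ∀ z : ℂ, ∃ y : ℂ, z ∈ ball (0 : ℂ) 1 → ‖y‖ ≤ C ∧ Tendsto (fun n => f n z) U (𝓝 y) := by
    intro z
    by_cases hz : z ∈ ball (0 : ℂ) 1
    · obtain ⟨y, hy, hy2⟩ := (isCompact_closedBall (0 : ℂ) C).ultrafilter_le_nhds
        (U.map (fun n => f n z)) (by
          simp only [le_principal_iff]
          change ∀ᶠ n in (U : Filter ℕ), f n z ∈ closedBall (0 : ℂ) C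
          exact Eventually.of_forall fun n => by simpa using hb n z hz)
      exact ⟨y, fun _ => ⟨by simpa using hy, hy2⟩⟩
    · exact ⟨0, fun h => absurd h hz⟩
  choose g hg using hlim
  have hC : 0 ≤ C := (norm_nonneg _).trans (hb 0 0 (by simp))
  have hlip : ∀ n, ∀ z0 z : ℂ, ∀ r > 0, ball z0 r ⊆ ball (0 : ℂ) 1 → z ∈ ball z0 r →
      dist (f n z) (f n z0) ≤ 2 * C / r * dist z z0 := by
    intro n z0 z r hr hsub hz
    apply Complex.dist_le_div_mul_dist_of_mapsTo_ball ((hd n).mono hsub) _ hz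
    intro w hw
    rw [mem_closedBall, dist_eq_norm]
    have h1 := hb n w (hsub hw)
    have h2 := hb n z0 (hsub (by simpa using hr))
    linarith [norm_sub_le (f n w) (f n z0)]
  have hlipg : ∀ z0 z : ℂ, ∀ r > 0, ball z0 r ⊆ ball (0 : ℂ) 1 → z ∈ ball z0 r →
      dist (g z) (g z0) ≤ 2 * C / r * dist z z0 := by
    intro z0 z r hr hsub hz
    have h1 := (hg z (hsub hz)).2
    have h2 := (hg z0 (hsub (by simpa using hr))).2
    exact le_of_tendsto (h1.dist h2) (Eventually.of_forall fun n => hlip n z0 z r hr hsub hz)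
  refine ⟨g, ?_, fun z hz => (hg z hz).1, ?_⟩
  · have : TendstoLocallyUniformlyOn f g U (ball 0 1) := by
      rw [Metric.tendstoLocallyUniformlyOn_iff]
      intro ε hε z0 hz0
      obtain ⟨r, hr, hsub⟩ := Metric.isOpen_iff.mp isOpen_ball z0 hz0
      set δ := min r (ε / 3 / (2 * C / r + 1)) with hδ
      have hL : 0 ≤ 2 * C / r := by positivity
      have hδ0 : 0 < δ := by positivity
      have hLδ : 2 * C / r * δ ≤ ε / 3 := by
        have : δ ≤ ε / 3 / (2 * C / r + 1) := min_le_right _ _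
        rw [le_div_iff₀ (by positivity)] at this
        nlinarith
      refine ⟨ball z0 δ, mem_nhdsWithin_of_mem_nhds (ball_mem_nhds _ hδ0), ?_⟩
      have h2 := (hg z0 hz0).2
      rw [Metric.tendsto_nhds] at h2
      filter_upwards [h2 (ε / 3) (by positivity)] with n hn z hz
      have hzr : z ∈ ball z0 r := ball_subset_ball (min_le_left _ _) hz
      have h3 := hlip n z0 z r hr hsub hzr
      have h4 := hlipg z0 z r hr hsub hzr
      have h5 : 2 * C / r * dist z z0 ≤ ε / 3 := by
        have : dist z z0 ≤ δ := (mem_ball.mp hz).le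
        nlinarith
      have h6 := dist_triangle4 (g z) (g z0) (f n z0) (f n z)
      rw [dist_comm (g z0), dist_comm (f n z0) (f n z)] at h6
      linarith
    exact this.differentiableOn (Eventually.of_forall hd) isOpen_ball
  · intro z hz w hw
    have h1 : Tendsto (fun n => f n z) U (𝓝 w) :=
      tendsto_const_nhds.congr' (by filter_upwards [hUle hw] with n hn using hn.symm)
    exact tendsto_nhds_unique (hg z hz).2 h1

open Classical in
/-- extension by zero of a function on the disk -/
noncomputable def ciExt (f : BoundedContinuousFunction (ball (0 : ℂ) 1) ℂ) (z : ℂ) : ℂ :=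
  if h : z ∈ ball (0 : ℂ) 1 then f ⟨z, h⟩ else 0

lemma ciExt_of_mem (f : BoundedContinuousFunction (ball (0 : ℂ) 1) ℂ) {z : ℂ}
    (h : z ∈ ball (0 : ℂ) 1) : ciExt f z = f ⟨z, h⟩ := by
  simp only [ciExt, dif_pos h]

/-- the space of bounded analytic functions on the disk -/
noncomputable def ciH : Submodule ℂ (BoundedContinuousFunction (ball (0 : ℂ) 1) ℂ) where
  carrier := {f | DifferentiableOn ℂ (ciExt f) (ball (0 : ℂ) 1)}
  add_mem' := by
    intro f g hf hg
    refine (DifferentiableOn.add hf hg).congr ?_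
    intro z hz
    simp [ciExt_of_mem _ hz]
  zero_mem' := by
    refine (differentiableOn_const (0 : ℂ)).congr ?_
    intro z hz
    simp [ciExt_of_mem _ hz]
  smul_mem' := by
    intro c f hf
    refine (DifferentiableOn.const_smul hf c).congr ?_
    intro z hz
    simp [ciExt_of_mem _ hz]

lemma ciH_closed : IsClosed (ciH : Set (BoundedContinuousFunction (ball (0 : ℂ) 1) ℂ)) := by
  apply IsSeqClosed.isClosed
  intro u f hu hlim
  have h : TendstoUniformlyOn (fun n => ciExt (u n)) (ciExt f) atTop (ball (0 : ℂ) 1) := by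
    rw [BoundedContinuousFunction.tendsto_iff_tendstoUniformly] at hlim
    rw [Metric.tendstoUniformlyOn_iff]
    rw [Metric.tendstoUniformly_iff] at hlim
    intro ε hε
    filter_upwards [hlim ε hε] with n hn z hz
    rw [ciExt_of_mem _ hz, ciExt_of_mem _ hz]
    exact hn _
  exact h.tendstoLocallyUniformlyOn.differentiableOn (Eventually.of_forall hu) isOpen_ball

lemma ci_uniform (lam : ℕ → ℂ) (hlam : ∀ i, lam i ∈ ball (0 : ℂ) 1)
    (h : ∀ w : ℕ → ℂ, (∃ Cw : ℝ, ∀ i, ‖w i‖ ≤ Cw) →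
        ∃ φ : ℂ → ℂ, DifferentiableOn ℂ φ (ball (0 : ℂ) 1) ∧
          (∃ Cφ : ℝ, ∀ z ∈ ball (0 : ℂ) 1, ‖φ z‖ ≤ Cφ) ∧
          ∀ i, φ (lam i) = w i) :
    ∃ M > (0 : ℝ), ∀ w : ℕ → ℂ, (∀ i, ‖w i‖ ≤ 1) →
        ∃ φ : ℂ → ℂ, DifferentiableOn ℂ φ (ball (0 : ℂ) 1) ∧
          (∀ z ∈ ball (0 : ℂ) 1, ‖φ z‖ ≤ M) ∧
          ∀ i, φ (lam i) = w i := by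
  have : CompleteSpace ciH := ciH_closed.completeSpace_coe
  let g : C(ℕ, ball (0 : ℂ) 1) := ⟨fun i => ⟨lam i, hlam i⟩, continuous_of_discreteTopology⟩
  let T : ciH →L[ℂ] BoundedContinuousFunction ℕ ℂ :=
    (BoundedContinuousFunction.compContinuousCLM ℂ ℂ g).comp ciH.subtypeL
  have hT : ∀ (f : ciH) (i : ℕ), T f i = ciExt f (lam i) := by
    intro f i
    rw [ciExt_of_mem _ (hlam i)]
    rfl
  have hsurj : Function.Surjective T := by
    intro w
    obtain ⟨φ, hd, ⟨C, hC⟩, hi⟩ := h w ⟨‖w‖, fun i => w.norm_coe_le_norm i⟩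
    let f : BoundedContinuousFunction (ball (0 : ℂ) 1) ℂ :=
      BoundedContinuousFunction.ofNormedAddCommGroup (fun z => φ z)
        (continuousOn_iff_continuous_domRestrict.mp hd.continuousOn) C (fun z => hC z z.2)
    have hf : f ∈ ciH := by
      refine hd.congr ?_
      intro z hz
      rw [ciExt_of_mem _ hz]
      rfl
    refine ⟨⟨f, hf⟩, ?_⟩
    ext i
    rw [hT, ciExt_of_mem _ (hlam i)]
    exact hi i
  obtain ⟨C, hC, hC2⟩ := T.exists_preimage_norm_le hsurj
  refine ⟨C, hC, ?_⟩
  intro w hw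
  let w' : BoundedContinuousFunction ℕ ℂ :=
    BoundedContinuousFunction.ofNormedAddCommGroup w continuous_of_discreteTopology 1 hw
  have hw' : ‖w'‖ ≤ 1 := BoundedContinuousFunction.norm_ofNormedAddCommGroup_le _ zero_le_one _
  obtain ⟨f, hf, hfn⟩ := hC2 w'
  refine ⟨ciExt f, f.2, ?_, ?_⟩
  · intro z hz
    rw [ciExt_of_mem _ hz]
    refine ((f : BoundedContinuousFunction (ball (0 : ℂ) 1) ℂ).norm_coe_le_norm _).trans ?_
    calc _ ≤ C * ‖w'‖ := hfn
      _ ≤ C * 1 := by gcongr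
      _ = C := mul_one C
  · intro i
    rw [← hT, hf]
    rfl

lemma ci_two_one (lam : ℕ → ℂ) (hlam : ∀ i, lam i ∈ ball (0 : ℂ) 1)
    (hdist : Function.Injective lam)
    (h : ∀ w : ℕ → ℂ, (∃ Cw : ℝ, ∀ i, ‖w i‖ ≤ Cw) →
        ∃ φ : ℂ → ℂ, DifferentiableOn ℂ φ (ball (0 : ℂ) 1) ∧
          (∃ Cφ : ℝ, ∀ z ∈ ball (0 : ℂ) 1, ‖φ z‖ ≤ Cφ) ∧
          ∀ i, φ (lam i) = w i) :
    ∃ ε > (0:ℝ), ∀ i : ℕ, ∀ F : Finset ℕ, i ∉ F →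
        ε ≤ ∏ j ∈ F, pseudoHyp (lam i) (lam j) := by
  obtain ⟨M, hM, hM2⟩ := ci_uniform lam hlam h
  refine ⟨1 / M, by positivity, ?_⟩
  intro i F hi
  obtain ⟨φ, hd, hb, hφ⟩ := hM2 (fun j => if j = i then 1 else 0) (by
    intro j; split_ifs <;> simp)
  have := ci_schwarz lam hlam hdist M F φ hd hb (by
    intro j hj
    rw [hφ, if_neg]
    rintro rfl
    exact hi hj) (lam i) (hlam i)
  rw [hφ] at this
  simp only [if_true, norm_one] at this
  rw [div_le_iff₀ hM]
  linarith

lemma ci_sum_exp (b : ℕ → ℝ) (hb : ∀ i, 0 ≤ b i) (r : ℕ → ℝ) (F : Finset ℕ) :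
    ∑ j ∈ F, b j * Real.exp (-∑ k ∈ F with r j ≤ r k, b k) ≤ 1 - Real.exp (-∑ k ∈ F, b k) := by
  induction F using Finset.induction_on_min_value r with
  | empty => simp
  | insert a s ha hmin ih =>
    rw [Finset.sum_insert ha, Finset.sum_insert ha]
    have h1 : ∑ j ∈ s, b j * Real.exp (-∑ k ∈ insert a s with r j ≤ r k, b k) ≤
        ∑ j ∈ s, b j * Real.exp (-∑ k ∈ s with r j ≤ r k, b k) := by
      apply Finset.sum_le_sum
      intro j _
      apply mul_le_mul_of_nonneg_left _ (hb j)
      apply Real.exp_le_exp.mpr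
      apply neg_le_neg
      apply Finset.sum_le_sum_of_subset_of_nonneg
      · exact Finset.filter_subset_filter _ (Finset.subset_insert _ _)
      · intro i _ _; exact hb i
    have h2 : (insert a s).filter (fun k => r a ≤ r k) = insert a s := by
      apply Finset.filter_true_of_mem
      intro k hk
      rcases Finset.mem_insert.mp hk with rfl | hk
      · exact le_rfl
      · exact hmin k hk
    rw [h2, Finset.sum_insert ha]
    set S := ∑ k ∈ s, b k
    have h3 : Real.exp (-S) = Real.exp (b a) * Real.exp (-(b a + S)) := by
      rw [← Real.exp_add]; congr 1; ring
    have h4 := Real.add_one_le_exp (b a)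
    have h5 := Real.exp_pos (-(b a + S))
    nlinarith

lemma ci_sum_t (lam : ℕ → ℂ) (hlam : ∀ i, lam i ∈ ball (0 : ℂ) 1)
    (ε : ℝ) (hε : 0 < ε) (h : ∀ i : ℕ, ∀ F : Finset ℕ, i ∉ F →
        ε ≤ ∏ j ∈ F, pseudoHyp (lam i) (lam j)) (F : Finset ℕ) (j : ℕ) (hj : j ∈ F) :
    ∑ k ∈ F, (1 - ‖lam k‖ ^ 2) * (1 - ‖lam j‖ ^ 2) / ‖1 - conj (lam k) * lam j‖ ^ 2 ≤
      1 - 2 * Real.log ε := by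
  have hn : ∀ i, ‖lam i‖ < 1 := fun i => by simpa using hlam i
  rw [← Finset.add_sum_erase F _ hj]
  have h1 := h j (F.erase j) (by simp)
  have hpos : 0 < ∏ k ∈ F.erase j, pseudoHyp (lam j) (lam k) := hε.trans_le h1
  have hne : ∀ k ∈ F.erase j, pseudoHyp (lam j) (lam k) ≠ 0 := Finset.prod_ne_zero_iff.mp hpos.ne'
  have h2 := Real.log_le_log hε h1
  rw [Real.log_prod hne] at h2
  have h3 : ∑ k ∈ F.erase j, (1 - ‖lam k‖ ^ 2) * (1 - ‖lam j‖ ^ 2) /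
      ‖1 - conj (lam k) * lam j‖ ^ 2 ≤
      ∑ k ∈ F.erase j, (-2) * Real.log (pseudoHyp (lam j) (lam k)) := by
    apply Finset.sum_le_sum
    intro k hk
    rw [← ciPhi_norm_sq (hn k) (hn j), ← pseudoHyp_eq]
    have h4 : 0 < pseudoHyp (lam j) (lam k) ^ 2 := by
      have := hne k hk
      positivity
    have h5 := Real.log_le_sub_one_of_pos h4
    rw [Real.log_pow] at h5
    push_cast at h5
    linarith
  rw [← Finset.mul_sum] at h3
  have h6 : (1 - ‖lam j‖ ^ 2) * (1 - ‖lam j‖ ^ 2) / ‖1 - conj (lam j) * lam j‖ ^ 2 = 1 := by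
    rw [← ciPhi_norm_sq (hn j) (hn j)]
    simp [ciPhi]
  linarith

/-- Herglotz type term -/
noncomputable def ciE (a z : ℂ) : ℂ :=
  ((1 - ‖a‖ ^ 2 : ℝ) : ℂ) * ((1 + conj a * z) / (1 - conj a * z))

lemma ciE_re {a z : ℂ} (_ha : ‖a‖ < 1) (_hz : ‖z‖ < 1) :
    (ciE a z).re = (1 - ‖a‖ ^ 2) * (1 - ‖a‖ ^ 2 * ‖z‖ ^ 2) / ‖1 - conj a * z‖ ^ 2 := by
  rw [ciE, Complex.re_ofReal_mul, mul_div_assoc]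
  congr 1
  have h : ‖a‖ ^ 2 * ‖z‖ ^ 2 = Complex.normSq (conj a * z) := by
    rw [← mul_pow, ← Complex.sq_norm]; simp
  rw [h, Complex.sq_norm]
  generalize conj a * z = u
  rw [Complex.div_re, ← add_div]
  congr 1
  simp [Complex.normSq_apply]
  ring

lemma ciE_diff {a : ℂ} (ha : ‖a‖ < 1) : DifferentiableOn ℂ (ciE a) (ball 0 1) := by
  intro z hz
  have h := ci_ne ha (by simpa using hz : ‖z‖ < 1)
  apply DifferentiableAt.differentiableWithinAt
  unfold ciE
  refine DifferentiableAt.const_mul ?_ _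
  refine DifferentiableAt.fun_div (by fun_prop) (by fun_prop) h

/-- Interpolating functions of Peter Jones -/
noncomputable def ciJ (lam : ℕ → ℂ) (F : Finset ℕ) (j : ℕ) (z : ℂ) : ℂ :=
  (∏ k ∈ F.erase j, ciPhi (lam k) z / ciPhi (lam k) (lam j)) *
    (((1 - ‖lam j‖ ^ 2 : ℝ) : ℂ) / (1 - conj (lam j) * z)) ^ 2 *
    Complex.exp (∑ k ∈ F with ‖lam j‖ ≤ ‖lam k‖, ciE (lam k) (lam j) -
      ∑ k ∈ F with ‖lam j‖ ≤ ‖lam k‖, ciE (lam k) z)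

lemma ciJ_diff (lam : ℕ → ℂ) (hn : ∀ i, ‖lam i‖ < 1) (F : Finset ℕ) (j : ℕ) :
    DifferentiableOn ℂ (ciJ lam F j) (ball 0 1) := by
  unfold ciJ
  refine DifferentiableOn.fun_mul (DifferentiableOn.fun_mul ?_ ?_) ?_
  · exact DifferentiableOn.fun_finsetProd fun k _ => (ciPhi_diff (hn k)).div_const _
  · refine DifferentiableOn.fun_pow ?_ 2
    refine DifferentiableOn.fun_div (by fun_prop) (by fun_prop) ?_
    intro z hz
    exact ci_ne (hn j) (by simpa using hz)
  · refine DifferentiableOn.cexp ?_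
    refine DifferentiableOn.fun_sub (by fun_prop) ?_
    exact DifferentiableOn.fun_sum fun k _ => ciE_diff (hn k)

lemma ciPhi_ne {a z : ℂ} (ha : ‖a‖ < 1) (hz : ‖z‖ < 1) (h : a ≠ z) : ciPhi a z ≠ 0 :=
  div_ne_zero (sub_ne_zero.mpr h) (ci_ne ha hz)

lemma ciJ_self (lam : ℕ → ℂ) (hn : ∀ i, ‖lam i‖ < 1) (hdist : Function.Injective lam)
    (F : Finset ℕ) (j : ℕ) : ciJ lam F j (lam j) = 1 := by
  unfold ciJ
  rw [Finset.prod_eq_one, sub_self, Complex.exp_zero]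
  · have h1 := ci_ne (hn j) (hn j)
    have h2 : ((1 - ‖lam j‖ ^ 2 : ℝ) : ℂ) = 1 - conj (lam j) * lam j := by
      rw [Complex.conj_mul']; push_cast; rfl
    rw [h2, div_self h1]; simp
  · intro k hk
    apply div_self
    apply ciPhi_ne (hn k) (hn j)
    intro e
    exact (Finset.ne_of_mem_erase hk) (hdist e)

lemma ciJ_other (lam : ℕ → ℂ) (F : Finset ℕ) (j i : ℕ) (hi : i ∈ F) (hij : i ≠ j) :
    ciJ lam F j (lam i) = 0 := by
  unfold ciJ
  rw [Finset.prod_eq_zero (Finset.mem_erase.mpr ⟨hij, hi⟩)]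
  · simp
  · simp [ciPhi]

lemma ciJ_bound (lam : ℕ → ℂ) (hlam : ∀ i, lam i ∈ ball (0 : ℂ) 1)
    (ε : ℝ) (hε : 0 < ε) (h : ∀ i : ℕ, ∀ F : Finset ℕ, i ∉ F →
        ε ≤ ∏ j ∈ F, pseudoHyp (lam i) (lam j)) (F : Finset ℕ) (j : ℕ) (hj : j ∈ F)
    (z : ℂ) (hz : ‖z‖ < 1) :
    ‖ciJ lam F j z‖ ≤ (1 / ε * Real.exp (2 * (1 - 2 * Real.log ε))) *
      ((1 - ‖lam j‖ ^ 2) ^ 2 / ‖1 - conj (lam j) * z‖ ^ 2 *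
        Real.exp (-∑ k ∈ F with ‖lam j‖ ≤ ‖lam k‖,
          (1 - ‖lam k‖ ^ 2) ^ 2 / ‖1 - conj (lam k) * z‖ ^ 2)) := by
  have hn : ∀ i, ‖lam i‖ < 1 := fun i => by simpa using hlam i
  have hs : ∀ i, 0 < 1 - ‖lam i‖ ^ 2 := fun i => by nlinarith [norm_nonneg (lam i), hn i]
  unfold ciJ
  rw [norm_mul, norm_mul]
  have h1 : ‖∏ k ∈ F.erase j, ciPhi (lam k) z / ciPhi (lam k) (lam j)‖ ≤ 1 / ε := by
    rw [Finset.prod_div_distrib, norm_div, norm_prod, norm_prod]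
    have h2 := h j (F.erase j) (by simp)
    simp only [pseudoHyp_eq] at h2
    apply div_le_div₀ zero_le_one _ hε h2
    apply Finset.prod_le_one
    · intros; positivity
    · intro k _
      exact (ciPhi_norm_lt (hn k) hz).le
  have h3 : ‖(((1 - ‖lam j‖ ^ 2 : ℝ) : ℂ) / (1 - conj (lam j) * z)) ^ 2‖ =
      (1 - ‖lam j‖ ^ 2) ^ 2 / ‖1 - conj (lam j) * z‖ ^ 2 := by
    rw [norm_pow, norm_div, Complex.norm_real, Real.norm_of_nonneg (hs j).le, div_pow]
  have h4 : ‖Complex.exp (∑ k ∈ F with ‖lam j‖ ≤ ‖lam k‖, ciE (lam k) (lam j) -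
      ∑ k ∈ F with ‖lam j‖ ≤ ‖lam k‖, ciE (lam k) z)‖ ≤
      Real.exp (2 * (1 - 2 * Real.log ε)) * Real.exp (-∑ k ∈ F with ‖lam j‖ ≤ ‖lam k‖,
          (1 - ‖lam k‖ ^ 2) ^ 2 / ‖1 - conj (lam k) * z‖ ^ 2) := by
    rw [Complex.norm_exp, ← Real.exp_add]
    apply Real.exp_le_exp.mpr
    rw [Complex.sub_re, Complex.re_sum, Complex.re_sum, sub_eq_add_neg]
    apply add_le_add
    · calc ∑ k ∈ F with ‖lam j‖ ≤ ‖lam k‖, (ciE (lam k) (lam j)).re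
          ≤ ∑ k ∈ F with ‖lam j‖ ≤ ‖lam k‖, 2 * ((1 - ‖lam k‖ ^ 2) * (1 - ‖lam j‖ ^ 2) /
              ‖1 - conj (lam k) * lam j‖ ^ 2) := by
            apply Finset.sum_le_sum
            intro k hk
            have hjk : ‖lam j‖ ≤ ‖lam k‖ := (Finset.mem_filter.mp hk).2
            rw [ciE_re (hn k) (hn j), ← mul_div_assoc]
            apply div_le_div_of_nonneg_right _ (by positivity)
            have h5 : 1 - ‖lam k‖ ^ 2 * ‖lam j‖ ^ 2 ≤ 2 * (1 - ‖lam j‖ ^ 2) := by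
              have h6 : ‖lam j‖ ^ 2 ≤ ‖lam k‖ ^ 2 := by gcongr
              nlinarith [hs j, sq_nonneg (‖lam j‖)]
            nlinarith [hs k]
        _ ≤ ∑ k ∈ F, 2 * ((1 - ‖lam k‖ ^ 2) * (1 - ‖lam j‖ ^ 2) /
              ‖1 - conj (lam k) * lam j‖ ^ 2) := by
            apply Finset.sum_le_sum_of_subset_of_nonneg (Finset.filter_subset _ _)
            intro k _ _
            have := hs k
            have := hs j
            positivity
        _ ≤ _ := by
            rw [← Finset.mul_sum]
            have := ci_sum_t lam hlam ε hε h F j hj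
            linarith
    · apply neg_le_neg
      apply Finset.sum_le_sum
      intro k _
      rw [ciE_re (hn k) hz]
      apply div_le_div_of_nonneg_right _ (by positivity)
      have h7 : ‖z‖ ^ 2 ≤ 1 := by nlinarith [norm_nonneg z]
      have h8 : 1 - ‖lam k‖ ^ 2 ≤ 1 - ‖lam k‖ ^ 2 * ‖z‖ ^ 2 := by
        nlinarith [sq_nonneg ‖lam k‖]
      rw [sq (1 - ‖lam k‖ ^ 2)]
      exact mul_le_mul_of_nonneg_left h8 (hs k).le
  rw [h3]
  have h9 : 0 ≤ (1 - ‖lam j‖ ^ 2) ^ 2 / ‖1 - conj (lam j) * z‖ ^ 2 := by positivity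
  refine (mul_le_mul (mul_le_mul_of_nonneg_right h1 h9) h4 (norm_nonneg _) (by positivity)).trans ?_
  apply le_of_eq
  ring

lemma ci_one_two (lam : ℕ → ℂ) (hlam : ∀ i, lam i ∈ ball (0 : ℂ) 1)
    (hdist : Function.Injective lam)
    (h : ∃ ε > (0:ℝ), ∀ i : ℕ, ∀ F : Finset ℕ, i ∉ F →
        ε ≤ ∏ j ∈ F, pseudoHyp (lam i) (lam j))
    (w : ℕ → ℂ) (hw : ∃ Cw : ℝ, ∀ i, ‖w i‖ ≤ Cw) :
        ∃ φ : ℂ → ℂ, DifferentiableOn ℂ φ (ball (0 : ℂ) 1) ∧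
          (∃ Cφ : ℝ, ∀ z ∈ ball (0 : ℂ) 1, ‖φ z‖ ≤ Cφ) ∧
          ∀ i, φ (lam i) = w i := by
  obtain ⟨ε, hε, h⟩ := h
  obtain ⟨W, hW⟩ := hw
  have hW0 : 0 ≤ W := (norm_nonneg _).trans (hW 0)
  have hn : ∀ i, ‖lam i‖ < 1 := fun i => by simpa using hlam i
  set K := 1 / ε * Real.exp (2 * (1 - 2 * Real.log ε)) with hK
  have hK0 : 0 ≤ K := by positivity
  obtain ⟨g, hg1, hg2, hg3⟩ := ci_montel
    (fun n z => ∑ j ∈ Finset.range n, w j * ciJ lam (Finset.range n) j z) (W * K) (by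
      intro n
      exact DifferentiableOn.fun_sum fun j _ => (ciJ_diff lam hn _ j).const_mul _) (by
      intro n z hz
      have hz' : ‖z‖ < 1 := by simpa using hz
      set F := Finset.range n
      set b : ℕ → ℝ := fun k => (1 - ‖lam k‖ ^ 2) ^ 2 / ‖1 - conj (lam k) * z‖ ^ 2 with hb
      have hs := ci_sum_exp b (fun i => by positivity) (fun k => ‖lam k‖) F
      calc ‖∑ j ∈ F, w j * ciJ lam F j z‖ ≤ ∑ j ∈ F, ‖w j * ciJ lam F j z‖ := norm_sum_le _ _
        _ ≤ ∑ j ∈ F, W * (K * (b j * Real.exp (-∑ k ∈ F with ‖lam j‖ ≤ ‖lam k‖, b k))) := by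
            apply Finset.sum_le_sum
            intro j hj
            rw [norm_mul]
            exact mul_le_mul (hW j) (ciJ_bound lam hlam ε hε h F j hj z hz') (norm_nonneg _) hW0
        _ = W * K * ∑ j ∈ F, b j * Real.exp (-∑ k ∈ F with ‖lam j‖ ≤ ‖lam k‖, b k) := by
            rw [Finset.mul_sum]
            apply Finset.sum_congr rfl
            intros; ring
        _ ≤ W * K * 1 := by
            apply mul_le_mul_of_nonneg_left _ (by positivity)
            have := Real.exp_pos (-∑ k ∈ F, b k)
            linarith
        _ = W * K := mul_one _)
  refine ⟨g, hg1, ⟨_, hg2⟩, ?_⟩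
  intro i
  apply hg3 _ (hlam i)
  filter_upwards [eventually_gt_atTop i] with n hin
  rw [Finset.sum_eq_single i]
  · rw [ciJ_self lam hn hdist, mul_one]
  · intro j _ hji
    rw [ciJ_other lam _ j i (Finset.mem_range.mpr hin) hji.symm, mul_zero]
  · intro hi
    exact absurd (Finset.mem_range.mpr hin) hi

/-- quadratic form -/
noncomputable def ciQ (K : ℕ → ℕ → ℂ) (F : Finset ℕ) (a : ℕ → ℂ) : ℂ :=
  ∑ i ∈ F, ∑ j ∈ F, a i * conj (a j) * K i j

lemma ciQ_insert (K : ℕ → ℕ → ℂ) (F : Finset ℕ) (a : ℕ → ℂ) (n : ℕ) (hn : n ∉ F) :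
    ciQ K (insert n F) a = a n * conj (a n) * K n n +
      (∑ j ∈ F, a n * conj (a j) * K n j + ∑ i ∈ F, a i * conj (a n) * K i n) + ciQ K F a := by
  unfold ciQ
  simp only [Finset.sum_insert hn, Finset.sum_add_distrib]
  ring

lemma ciQ_congr (K : ℕ → ℕ → ℂ) (F : Finset ℕ) (a b : ℕ → ℂ) (h : ∀ i ∈ F, a i = b i) :
    ciQ K F a = ciQ K F b := by
  unfold ciQ
  refine Finset.sum_congr rfl fun i hi => Finset.sum_congr rfl fun j hj => ?_
  rw [h i hi, h j hj]

lemma ci_signs (K : ℕ → ℕ → ℂ) (a : ℕ → ℂ) (F : Finset ℕ) :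
    ∃ v : ℕ → ℂ, (∀ i, v i = a i ∨ v i = -a i) ∧
      (ciQ K F v).re ≤ ∑ i ∈ F, (a i * conj (a i) * K i i).re := by
  induction F using Finset.induction_on with
  | empty => exact ⟨a, fun i => Or.inl rfl, by simp [ciQ]⟩
  | insert n F hn ih =>
    obtain ⟨v, hv, hle⟩ := ih
    have hne : ∀ i ∈ F, i ≠ n := fun i hi e => hn (e ▸ hi)
    set X : ℂ := ∑ j ∈ F, a n * conj (v j) * K n j + ∑ i ∈ F, v i * conj (a n) * K i n with hX
    have key : ∀ s : ℂ, (s = 1 ∨ s = -1) →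
        ciQ K (insert n F) (Function.update v n (s * a n)) =
          a n * conj (a n) * K n n + s * X + ciQ K F v := by
      intro s hs
      rw [ciQ_insert K F _ n hn]
      rw [ciQ_congr K F (Function.update v n (s * a n)) v
        (fun i hi => Function.update_of_ne (hne i hi) _ _)]
      simp only [Function.update_self]
      have h1 : ∑ j ∈ F, s * a n * conj (Function.update v n (s * a n) j) * K n j =
          s * ∑ j ∈ F, a n * conj (v j) * K n j := by
        rw [Finset.mul_sum]
        refine Finset.sum_congr rfl fun j hj => ?_
        rw [Function.update_of_ne (hne j hj)]; ring
      have hsc : conj s = s := by rcases hs with rfl | rfl <;> simp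
      have hss : s * s = 1 := by rcases hs with rfl | rfl <;> simp
      have h2 : ∑ i ∈ F, Function.update v n (s * a n) i * conj (s * a n) * K i n =
          s * ∑ i ∈ F, v i * conj (a n) * K i n := by
        rw [Finset.mul_sum]
        refine Finset.sum_congr rfl fun j hj => ?_
        rw [Function.update_of_ne (hne j hj), map_mul, hsc]; ring
      rw [h1, h2, hX, map_mul, hsc]
      linear_combination (a n * conj (a n) * K n n) * hss
    rw [Finset.sum_insert hn]
    have hup : ∀ s : ℂ, (s = 1 ∨ s = -1) → ∀ i, Function.update v n (s * a n) i = a i ∨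
        Function.update v n (s * a n) i = -a i := by
      intro s hs i
      by_cases hi : i = n
      · subst hi
        rw [Function.update_self]
        rcases hs with rfl | rfl <;> simp
      · rw [Function.update_of_ne hi]; exact hv i
    rcases le_total X.re 0 with h | h
    · refine ⟨_, hup 1 (Or.inl rfl), ?_⟩
      rw [key 1 (Or.inl rfl), one_mul, Complex.add_re, Complex.add_re]
      linarith
    · refine ⟨_, hup (-1) (Or.inr rfl), ?_⟩
      rw [key (-1) (Or.inr rfl), neg_one_mul, Complex.add_re, Complex.add_re, Complex.neg_re]
      linarith

/-- Szego kernel -/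
noncomputable def ciK (lam : ℕ → ℂ) (i j : ℕ) : ℂ := 1 / (1 - lam i * conj (lam j))

lemma ci_ne_closed {a z : ℂ} (ha : ‖a‖ < 1) (hz : ‖z‖ ≤ 1) : 1 - conj a * z ≠ 0 := by
  intro h
  have h1 : conj a * z = 1 := (sub_eq_zero.mp h).symm
  have h2 : ‖a‖ * ‖z‖ = 1 := by
    have := congrArg norm h1
    simpa using this
  nlinarith [norm_nonneg a, norm_nonneg z]

lemma ci_repro {f : ℂ → ℂ} (hf : DiffContOnCl ℂ f (ball 0 1)) {a : ℂ} (ha : ‖a‖ < 1) :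
    Real.circleAverage (fun z => f z * conj (1 / (1 - conj a * z))) 0 1 = f a := by
  have h := DiffContOnCl.circleAverage_smul_div (f := f) (c := 0) (R := 1) (w := a)
    (by simpa using hf) (by simpa using ha)
  rw [← h]
  apply Real.circleAverage_congr_sphere
  intro z hz
  have hz1 : ‖z‖ = 1 := by simpa using hz
  have hzz : z * conj z = 1 := by
    rw [Complex.mul_conj']; simp [hz1]
  have hza : z - a ≠ 0 := by
    rw [sub_ne_zero]; rintro rfl; linarith
  have h3 : 1 - a * conj z ≠ 0 := by
    have := ci_ne_closed ha hz1.le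
    intro h0
    apply this
    have := congrArg conj h0
    simpa using this
  simp only [sub_zero, smul_eq_mul, map_div₀, map_sub, map_one, map_mul, Complex.conj_conj]
  rw [mul_comm, div_mul_eq_mul_div, div_mul_eq_mul_div, div_eq_div_iff h3 hza]
  linear_combination (a * f z) * hzz

lemma ci_pick_cl (lam : ℕ → ℂ) (hn : ∀ i, ‖lam i‖ < 1) (F : Finset ℕ) (a : ℕ → ℂ)
    {f : ℂ → ℂ} (hf : DiffContOnCl ℂ f (ball 0 1)) (M : ℝ) (hM : 0 < M)
    (hb : ∀ z, ‖z‖ = 1 → ‖f z‖ ≤ M) :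
    (ciQ (ciK lam) F (fun i => f (lam i) * a i)).re ≤ M ^ 2 * (ciQ (ciK lam) F a).re := by
  set k : ℕ → ℂ → ℂ := fun j z => 1 / (1 - conj (lam j) * z) with hk
  have hkd : ∀ j, DiffContOnCl ℂ (k j) (ball 0 1) := by
    intro j
    apply DifferentiableOn.diffContOnCl
    rw [closure_ball _ one_ne_zero]
    intro z hz
    apply DifferentiableAt.differentiableWithinAt
    refine DifferentiableAt.fun_div (by fun_prop) (by fun_prop) ?_
    exact ci_ne_closed (hn j) (by simpa using hz)
  have hcs : ∀ {g : ℂ → ℂ}, DiffContOnCl ℂ g (ball 0 1) → ContinuousOn g (sphere 0 |(1 : ℝ)|) := by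
    intro g hg
    have := hg.continuousOn
    rw [closure_ball _ one_ne_zero] at this
    rw [abs_one]
    exact this.mono sphere_subset_closedBall
  set u : ℂ → ℂ := fun z => ∑ j ∈ F, conj (f (lam j) * a j) * k j z with hu
  set v : ℂ → ℂ := fun z => ∑ j ∈ F, conj (a j) * k j z with hv
  have hsumd : ∀ c : ℕ → ℂ, DiffContOnCl ℂ (fun z => ∑ j ∈ F, c j * k j z) (ball 0 1) := by
    intro c
    constructor
    · exact DifferentiableOn.fun_sum fun j _ => (hkd j).differentiableOn.const_mul _
    · exact continuousOn_finsetSum _ fun j _ => continuousOn_const.mul (hkd j).continuousOn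
  have hud : DiffContOnCl ℂ u (ball 0 1) := hsumd _
  have hvd : DiffContOnCl ℂ v (ball 0 1) := hsumd _
  set g : ℕ → ℂ → ℂ := fun i z => ((M ^ 2 : ℝ) : ℂ) * (f (lam i) * a i) * u z -
    2 * ((M ^ 2 : ℝ) : ℂ) * a i * (f z * u z) + ((M ^ 4 : ℝ) : ℂ) * a i * v z with hg
  have hgd : ∀ i, DiffContOnCl ℂ (g i) (ball 0 1) := by
    intro i
    have h1 := hf.differentiableOn
    have h2 := hud.differentiableOn
    have h3 := hvd.differentiableOn
    have h1' := hf.continuousOn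
    have h2' := hud.continuousOn
    have h3' := hvd.continuousOn
    constructor
    · simp only [hg]; fun_prop
    · simp only [hg]; fun_prop
  set H : ℂ → ℂ := fun z => ∑ i ∈ F, g i z * conj (k i z) with hH
  have hint : ∀ i, CircleIntegrable (fun z => g i z * conj (k i z)) 0 1 := by
    intro i
    apply ContinuousOn.circleIntegrable'
    exact (hcs (hgd i)).mul (Complex.continuous_conj.comp_continuousOn (hcs (hkd i)))
  have havg : Real.circleAverage H 0 1 = ∑ i ∈ F, g i (lam i) := by
    rw [hH, Real.circleAverage_fun_sum (fun i _ => hint i)]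
    exact Finset.sum_congr rfl fun i _ => ci_repro (hgd i) (hn i)
  have hHint : CircleIntegrable H 0 1 := by
    apply ContinuousOn.circleIntegrable'
    exact continuousOn_finsetSum _ fun i _ =>
      (hcs (hgd i)).mul (Complex.continuous_conj.comp_continuousOn (hcs (hkd i)))
  have hHeq : ∀ z, H z = ((M ^ 2 : ℝ) : ℂ) * (u z * conj (u z)) -
      2 * ((M ^ 2 : ℝ) : ℂ) * (f z * u z * conj (v z)) + ((M ^ 4 : ℝ) : ℂ) * (v z * conj (v z)) := by
    intro z
    have e1 : conj (u z) = ∑ j ∈ F, (f (lam j) * a j) * conj (k j z) := by simp [hu, map_sum]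
    have e2 : conj (v z) = ∑ j ∈ F, a j * conj (k j z) := by simp [hv, map_sum]
    rw [e1, e2]
    simp only [Finset.mul_sum, ← Finset.sum_sub_distrib, ← Finset.sum_add_distrib, hH]
    refine Finset.sum_congr rfl fun i _ => ?_
    simp only [hg]; ring
  have hpos : 0 ≤ (Real.circleAverage H 0 1).re := by
    have := Complex.reCLM.circleAverage_comp_comm hHint
    rw [show (Real.circleAverage H 0 1).re = Complex.reCLM (Real.circleAverage H 0 1) from rfl,
      ← this]
    apply Real.circleAverage_nonneg_of_nonneg
    intro z hz
    have hz1 : ‖z‖ = 1 := by simpa using hz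
    have hfz := hb z hz1
    simp only [Function.comp, Complex.reCLM_apply, hHeq]
    have h1 : (((M ^ 2 : ℝ) : ℂ) * (u z * conj (u z)) -
      2 * ((M ^ 2 : ℝ) : ℂ) * (f z * u z * conj (v z)) +
        ((M ^ 4 : ℝ) : ℂ) * (v z * conj (v z))).re =
      (M ^ 2 - ‖f z‖ ^ 2) * ‖u z‖ ^ 2 + ‖f z * u z - ((M ^ 2 : ℝ) : ℂ) * v z‖ ^ 2 := by
      rw [show 2 * ((M ^ 2 : ℝ) : ℂ) = ((2 * M ^ 2 : ℝ) : ℂ) by push_cast; ring]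
      rw [Complex.add_re, Complex.sub_re, Complex.re_ofReal_mul, Complex.re_ofReal_mul,
        Complex.re_ofReal_mul]
      simp only [Complex.sq_norm, Complex.normSq_apply, Complex.mul_re, Complex.mul_im,
        Complex.sub_re, Complex.sub_im, Complex.ofReal_re, Complex.ofReal_im, Complex.conj_re,
        Complex.conj_im]
      ring
    rw [h1]
    have h2 : ‖f z‖ ^ 2 ≤ M ^ 2 := by gcongr
    have h3 : 0 ≤ M ^ 2 - ‖f z‖ ^ 2 := by linarith
    positivity
  rw [havg] at hpos
  have hval : ∑ i ∈ F, g i (lam i) = ((M ^ 2 : ℝ) : ℂ) *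
      (((M ^ 2 : ℝ) : ℂ) * ciQ (ciK lam) F a - ciQ (ciK lam) F (fun i => f (lam i) * a i)) := by
    unfold ciQ
    rw [Finset.mul_sum, ← Finset.sum_sub_distrib, Finset.mul_sum]
    refine Finset.sum_congr rfl fun i _ => ?_
    have e1 : ∑ j ∈ F, a i * conj (a j) * ciK lam i j = a i * v (lam i) := by
      simp only [hv, Finset.mul_sum, ciK, hk]
      refine Finset.sum_congr rfl fun j _ => ?_
      rw [mul_comm (lam i)]; ring
    have e2 : ∑ j ∈ F, (f (lam i) * a i) * conj (f (lam j) * a j) * ciK lam i j =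
        f (lam i) * a i * u (lam i) := by
      simp only [hu, Finset.mul_sum, ciK, hk]
      refine Finset.sum_congr rfl fun j _ => ?_
      rw [mul_comm (lam i)]; ring
    rw [e1, e2]
    simp only [hg]
    push_cast
    ring
  rw [hval, Complex.re_ofReal_mul, Complex.sub_re, Complex.re_ofReal_mul] at hpos
  have hM2 : 0 < M ^ 2 := by positivity
  have := nonneg_of_mul_nonneg_right hpos hM2
  linarith

lemma ci_pick (lam : ℕ → ℂ) (hn : ∀ i, ‖lam i‖ < 1) (F : Finset ℕ) (a : ℕ → ℂ)
    {f : ℂ → ℂ} (hf : DifferentiableOn ℂ f (ball 0 1)) (M : ℝ) (hM : 0 < M)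
    (hb : ∀ z ∈ ball (0 : ℂ) 1, ‖f z‖ ≤ M) :
    (ciQ (ciK lam) F (fun i => f (lam i) * a i)).re ≤ M ^ 2 * (ciQ (ciK lam) F a).re := by
  have hr : ∀ r : ℝ, r ∈ Set.Ioo (0 : ℝ) 1 →
      (ciQ (ciK lam) F (fun i => f (r * lam i) * a i)).re ≤ M ^ 2 * (ciQ (ciK lam) F a).re := by
    intro r hr
    have hmem : ∀ z : ℂ, ‖z‖ ≤ 1 → (r : ℂ) * z ∈ ball (0 : ℂ) 1 := by
      intro z hz
      simp only [mem_ball_zero_iff, norm_mul, Complex.norm_real, Real.norm_of_nonneg hr.1.le]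
      nlinarith [hr.1, hr.2, norm_nonneg z]
    refine ci_pick_cl lam hn F a (f := fun z => f (r * z)) ?_ M hM
      (fun z hz => hb _ (hmem z hz.le))
    apply DifferentiableOn.diffContOnCl
    rw [closure_ball _ one_ne_zero]
    refine hf.comp (f := fun z : ℂ => (r : ℂ) * z) (by fun_prop) ?_
    intro z hz
    exact hmem z (by simpa using hz)
  have hlim : ∀ i, Tendsto (fun r : ℝ => f (r * lam i)) (𝓝[<] 1) (𝓝 (f (lam i))) := by
    intro i
    have h1 : ContinuousAt f (lam i) :=
      (hf.differentiableAt (isOpen_ball.mem_nhds (by simpa using hn i))).continuousAt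
    have h2 : Tendsto (fun r : ℝ => (r : ℂ) * lam i) (𝓝[<] 1) (𝓝 (lam i)) := by
      have : Continuous (fun r : ℝ => (r : ℂ) * lam i) := by fun_prop
      have := this.tendsto 1
      simp only [Complex.ofReal_one, one_mul] at this
      exact this.mono_left nhdsWithin_le_nhds
    exact h1.tendsto.comp h2
  have hQ : Tendsto (fun r : ℝ => (ciQ (ciK lam) F (fun i => f (r * lam i) * a i)).re) (𝓝[<] 1)
      (𝓝 (ciQ (ciK lam) F (fun i => f (lam i) * a i)).re) := by
    refine (Complex.continuous_re.tendsto _).comp ?_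
    unfold ciQ
    refine tendsto_finsetSum _ fun i _ => tendsto_finsetSum _ fun j _ => ?_
    refine Tendsto.mul_const _ (Tendsto.mul ((hlim i).mul_const _) ?_)
    exact (Complex.continuous_conj.tendsto _).comp ((hlim j).mul_const _)
  refine le_of_tendsto hQ ?_
  filter_upwards [Ioo_mem_nhdsLT (zero_lt_one' ℝ)] with r h using hr r h

lemma ci_gram (lam : ℕ → ℂ) (hn : ∀ i, ‖lam i‖ < 1) (M : ℝ) (hM : 0 < M)
    (hw : ∀ w : ℕ → ℂ, (∀ i, ‖w i‖ ≤ 1) →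
        ∃ φ : ℂ → ℂ, DifferentiableOn ℂ φ (ball (0 : ℂ) 1) ∧
          (∀ z ∈ ball (0 : ℂ) 1, ‖φ z‖ ≤ M) ∧ ∀ i, φ (lam i) = w i)
    (F : Finset ℕ) (a : ℕ → ℂ) :
    ‖ciQ (ciK lam) F a‖ ≤ M ^ 2 * ∑ i ∈ F, (a i * conj (a i) * ciK lam i i).re := by
  have hreal : conj (ciQ (ciK lam) F a) = ciQ (ciK lam) F a := by
    unfold ciQ
    simp only [map_sum]
    rw [Finset.sum_comm]
    refine Finset.sum_congr rfl fun i _ => Finset.sum_congr rfl fun j _ => ?_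
    simp only [ciK, map_mul, map_div₀, map_sub, map_one, Complex.conj_conj]
    rw [mul_comm (conj (lam j)) (lam i)]
    ring
  have hnn : 0 ≤ (ciQ (ciK lam) F a).re := by
    have := ci_pick lam hn F a (f := fun _ => 0) (differentiableOn_const _) 1 one_pos (by simp)
    simpa [ciQ] using this
  rw [← Complex.conj_eq_iff_re.mp hreal, Complex.norm_real, Real.norm_of_nonneg hnn]
  obtain ⟨v, hv, hle⟩ := ci_signs (ciK lam) a F
  classical
  obtain ⟨φ, hd, hb, hφ⟩ := hw (fun i => if v i = a i then 1 else -1) (by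
    intro i; split_ifs <;> simp)
  have := ci_pick lam hn F v hd M hM hb
  have e : (fun i => φ (lam i) * v i) = a := by
    funext i
    rw [hφ]
    split_ifs with h
    · rw [one_mul, h]
    · rcases hv i with hc | hc
      · exact absurd hc h
      · rw [hc]; ring
  rw [e] at this
  exact this.trans (mul_le_mul_of_nonneg_left hle (by positivity))

/-- Normalised Szego Gram matrix -/
noncomputable def ciG (lam : ℕ → ℂ) (i j : ℕ) : ℂ :=
  (Real.sqrt (1 - ‖lam i‖ ^ 2) * Real.sqrt (1 - ‖lam j‖ ^ 2) : ℝ) /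
    (1 - lam i * conj (lam j))

lemma ciK_diag (lam : ℕ → ℂ) (i : ℕ) : ciK lam i i = ((1 / (1 - ‖lam i‖ ^ 2) : ℝ) : ℂ) := by
  rw [ciK, Complex.mul_conj']; push_cast; rfl

lemma ci_gram_norm (lam : ℕ → ℂ) (hn : ∀ i, ‖lam i‖ < 1) (M : ℝ) (hM : 0 < M)
    (hw : ∀ w : ℕ → ℂ, (∀ i, ‖w i‖ ≤ 1) →
        ∃ φ : ℂ → ℂ, DifferentiableOn ℂ φ (ball (0 : ℂ) 1) ∧
          (∀ z ∈ ball (0 : ℂ) 1, ‖φ z‖ ≤ M) ∧ ∀ i, φ (lam i) = w i)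
    (F : Finset ℕ) (a : ℕ → ℂ) :
    ‖ciQ (ciG lam) F a‖ ≤ M ^ 2 * ∑ i ∈ F, ‖a i‖ ^ 2 := by
  have h := ci_gram lam hn M hM hw F (fun i => a i * (Real.sqrt (1 - ‖lam i‖ ^ 2) : ℝ))
  have e1 : ciQ (ciK lam) F (fun i => a i * (Real.sqrt (1 - ‖lam i‖ ^ 2) : ℝ)) =
      ciQ (ciG lam) F a := by
    unfold ciQ ciG ciK
    refine Finset.sum_congr rfl fun i _ => Finset.sum_congr rfl fun j _ => ?_
    rw [map_mul, Complex.conj_ofReal]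
    push_cast
    ring
  have e2 : ∀ i, ((fun i => a i * (Real.sqrt (1 - ‖lam i‖ ^ 2) : ℝ)) i *
      conj ((fun i => a i * (Real.sqrt (1 - ‖lam i‖ ^ 2) : ℝ)) i) * ciK lam i i).re =
      ‖a i‖ ^ 2 := by
    intro i
    have hs : 0 < 1 - ‖lam i‖ ^ 2 := by nlinarith [norm_nonneg (lam i), hn i]
    have : (a i * (Real.sqrt (1 - ‖lam i‖ ^ 2) : ℝ) *
      conj (a i * (Real.sqrt (1 - ‖lam i‖ ^ 2) : ℝ)) * ciK lam i i) = ((‖a i‖ ^ 2 : ℝ) : ℂ) := by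
      rw [Complex.mul_conj', norm_mul, Complex.norm_real, Real.norm_of_nonneg (Real.sqrt_nonneg _),
        ciK_diag, ← Complex.ofReal_pow, ← Complex.ofReal_mul, mul_pow, Real.sq_sqrt hs.le]
      congr 1
      field_simp
    simp only [this, Complex.ofReal_re]
  rw [e1] at h
  simp only [e2] at h
  exact h

lemma ci_rows (G : ℕ → ℕ → ℂ) (hG : ∀ i j, G j i = conj (G i j)) (hG1 : ∀ i, G i i = 1) (M : ℝ)
    (hM : 0 < M) (h : ∀ (F : Finset ℕ) (a : ℕ → ℂ), ‖ciQ G F a‖ ≤ M * ∑ i ∈ F, ‖a i‖ ^ 2)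
    (i : ℕ) (F : Finset ℕ) (hi : i ∉ F) : ∑ j ∈ F, ‖G i j‖ ^ 2 ≤ 2 * M * (M + 1) := by
  set T := ∑ j ∈ F, ‖G i j‖ ^ 2 with hT
  set t : ℝ := 1 / (2 * M) with ht
  set a : ℕ → ℂ := fun j => if j = i then 1 else t * G i j with ha
  have hne : ∀ j ∈ F, j ≠ i := fun j hj e => hi (e ▸ hj)
  have hai : a i = 1 := by simp [ha]
  have haj : ∀ j ∈ F, a j = t * G i j := fun j hj => by simp [ha, hne j hj]
  have hsum : ∑ j ∈ F, ‖a j‖ ^ 2 = t ^ 2 * T := by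
    rw [hT, Finset.mul_sum]
    refine Finset.sum_congr rfl fun j hj => ?_
    rw [haj j hj, norm_mul, Complex.norm_real, mul_pow, Real.norm_eq_abs, sq_abs]
  have h1 := h (insert i F) a
  have h2 := h F a
  rw [Finset.sum_insert hi, hsum, hai] at h1
  rw [hsum] at h2
  rw [ciQ_insert G F a i hi, hai, hG1] at h1
  have e1 : ∑ j ∈ F, 1 * conj (a j) * G i j = ((t * T : ℝ) : ℂ) := by
    rw [hT, Finset.mul_sum, Complex.ofReal_sum]
    refine Finset.sum_congr rfl fun j hj => ?_
    rw [haj j hj, map_mul, Complex.conj_ofReal, one_mul, mul_assoc, Complex.conj_mul']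
    push_cast; rfl
  have e2 : ∑ j ∈ F, a j * conj 1 * G j i = ((t * T : ℝ) : ℂ) := by
    rw [hT, Finset.mul_sum, Complex.ofReal_sum]
    refine Finset.sum_congr rfl fun j hj => ?_
    rw [haj j hj, map_one, mul_one, hG i j, mul_assoc, Complex.mul_conj']
    push_cast; rfl
  rw [e1, e2] at h1
  set q := ciQ G F a
  have h3 : ‖((2 * (t * T) : ℝ) : ℂ)‖ ≤ M * (‖(1 : ℂ)‖ ^ 2 + t ^ 2 * T) + 1 + M * (t ^ 2 * T) := by
    have : ((2 * (t * T) : ℝ) : ℂ) = (1 * conj 1 * 1 + (((t * T : ℝ) : ℂ) + ((t * T : ℝ) : ℂ)) + q)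
        - 1 - q := by
      simp; ring
    rw [this]
    refine (norm_sub_le _ _).trans (add_le_add ((norm_sub_le _ _).trans (add_le_add h1 ?_)) h2)
    simp
  rw [Complex.norm_real, norm_one] at h3
  have h4 := (Real.le_norm_self _).trans h3
  have h5 : M * (t * t) = t / 2 := by rw [ht]; field_simp
  have h7 : M * (t ^ 2 * T) = t * T / 2 := by linear_combination T * h5
  have h6 : t * T ≤ M + 1 := by linarith
  rw [ht, one_div, inv_mul_le_iff₀ (by positivity)] at h6
  linarith

lemma ci_three_one (lam : ℕ → ℂ) (hn : ∀ i, ‖lam i‖ < 1)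
    (δ : ℝ) (hδ : 0 < δ) (hsep : ∀ i j : ℕ, i ≠ j → δ ≤ pseudoHyp (lam i) (lam j))
    (M : ℝ) (hM : 0 < M)
    (h : ∀ (F : Finset ℕ) (a : ℕ → ℂ), ‖ciQ (ciG lam) F a‖ ≤ M * ∑ i ∈ F, ‖a i‖ ^ 2) :
    ∃ ε > (0:ℝ), ∀ i : ℕ, ∀ F : Finset ℕ, i ∉ F →
        ε ≤ ∏ j ∈ F, pseudoHyp (lam i) (lam j) := by
  have hs : ∀ i, 0 < 1 - ‖lam i‖ ^ 2 := fun i => by nlinarith [norm_nonneg (lam i), hn i]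
  refine ⟨Real.exp (-(2 * M * (M + 1) / δ ^ 2) / 2), Real.exp_pos _, ?_⟩
  intro i F hi
  have hT := ci_rows (ciG lam) (by
      intro i j
      simp only [ciG, map_div₀, Complex.conj_ofReal, map_sub, map_one, map_mul, Complex.conj_conj]
      rw [mul_comm (conj (lam i)), mul_comm (Real.sqrt (1 - ‖lam i‖ ^ 2))])
    (by
      intro i
      rw [ciG, Real.mul_self_sqrt (hs i).le, Complex.mul_conj']
      have : (1 : ℂ) - (‖lam i‖ : ℂ) ^ 2 = ((1 - ‖lam i‖ ^ 2 : ℝ) : ℂ) := by push_cast; rfl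
      rw [this]
      exact div_self (by exact_mod_cast (hs i).ne')) M hM h i F hi
  have hne : ∀ j ∈ F, i ≠ j := fun j hj e => hi (e ▸ hj)
  have hpos : ∀ j ∈ F, 0 < pseudoHyp (lam i) (lam j) := fun j hj =>
    hδ.trans_le (hsep i j (hne j hj))
  rw [← Real.exp_log (Finset.prod_pos hpos), Real.exp_le_exp,
    Real.log_prod (fun j hj => (hpos j hj).ne')]
  have hterm : ∀ j ∈ F, -(‖ciG lam i j‖ ^ 2 / δ ^ 2) / 2 ≤
      Real.log (pseudoHyp (lam i) (lam j)) := by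
    intro j hj
    set ρ := pseudoHyp (lam i) (lam j) with hρ
    have hρ0 : 0 < ρ := hpos j hj
    have hG : ‖ciG lam i j‖ ^ 2 = 1 - ρ ^ 2 := by
      rw [hρ, pseudoHyp_eq, ciPhi_norm_sq (hn j) (hn i), ciG, norm_div, Complex.norm_real,
        Real.norm_of_nonneg (by positivity), div_pow, mul_pow, Real.sq_sqrt (hs i).le,
        Real.sq_sqrt (hs j).le, mul_comm (lam i), mul_comm (1 - ‖lam i‖ ^ 2)]
    have h1 := Real.one_sub_inv_le_log_of_pos (show 0 < ρ ^ 2 by positivity)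
    rw [Real.log_pow] at h1
    push_cast at h1
    have h2 : 1 - (ρ ^ 2)⁻¹ = -((1 - ρ ^ 2) / ρ ^ 2) := by field_simp; ring
    have h3 : (1 - ρ ^ 2) / ρ ^ 2 ≤ ‖ciG lam i j‖ ^ 2 / δ ^ 2 := by
      rw [← hG]
      have := hsep i j (hne j hj)
      gcongr
    linarith
  refine le_trans ?_ (Finset.sum_le_sum hterm)
  rw [← Finset.sum_div, Finset.sum_neg_distrib, ← Finset.sum_div]
  have : (∑ j ∈ F, ‖ciG lam i j‖ ^ 2) / δ ^ 2 ≤ 2 * M * (M + 1) / δ ^ 2 := by gcongr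
  linarith

end CI

/-- **Carleson's interpolation theorem.** For a sequence of distinct points `{λᵢ} ⊆ 𝔻`
the following are equivalent: (1) `∏_{j ≠ i} ρ(λᵢ, λⱼ) ≥ ε > 0` uniformly in `i`
(expressed via all finite partial products); (2) the sequence is interpolating for
`H^∞(𝔻)`; (3) the sequence is weakly separated and the Szegő Grammian
`Gᵢⱼ = (1-|λᵢ|²)^{1/2}(1-|λⱼ|²)^{1/2}/(1-λᵢλ̄ⱼ)` is bounded on `ℓ²`. -/
theorem carleson_interpolation (lam : ℕ → ℂ)
    (hlam : ∀ i, lam i ∈ ball (0 : ℂ) 1) (hdist : Function.Injective lam) :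
    ((∃ ε > (0:ℝ), ∀ i : ℕ, ∀ F : Finset ℕ, i ∉ F →
        ε ≤ ∏ j ∈ F, pseudoHyp (lam i) (lam j)) ↔
      (∀ w : ℕ → ℂ, (∃ Cw : ℝ, ∀ i, ‖w i‖ ≤ Cw) →
        ∃ φ : ℂ → ℂ, DifferentiableOn ℂ φ (ball (0 : ℂ) 1) ∧
          (∃ Cφ : ℝ, ∀ z ∈ ball (0 : ℂ) 1, ‖φ z‖ ≤ Cφ) ∧
          ∀ i, φ (lam i) = w i)) ∧
    ((∀ w : ℕ → ℂ, (∃ Cw : ℝ, ∀ i, ‖w i‖ ≤ Cw) →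
        ∃ φ : ℂ → ℂ, DifferentiableOn ℂ φ (ball (0 : ℂ) 1) ∧
          (∃ Cφ : ℝ, ∀ z ∈ ball (0 : ℂ) 1, ‖φ z‖ ≤ Cφ) ∧
          ∀ i, φ (lam i) = w i) ↔
      ((∃ ε > (0:ℝ), ∀ i j : ℕ, i ≠ j → ε ≤ pseudoHyp (lam i) (lam j)) ∧
        ∃ M > (0:ℝ), ∀ (F : Finset ℕ) (a : ℕ → ℂ),
          ‖∑ i ∈ F, ∑ j ∈ F, a i * starRingEnd ℂ (a j) *
              ((Real.sqrt (1 - ‖lam i‖ ^ 2) * Real.sqrt (1 - ‖lam j‖ ^ 2) : ℝ) /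
                (1 - lam i * starRingEnd ℂ (lam j)))‖ ≤
            M * ∑ i ∈ F, ‖a i‖ ^ 2)) := by
  refine ⟨⟨fun h w hw => ci_one_two lam hlam hdist h w hw, fun h => ci_two_one lam hlam hdist h⟩,
    ⟨?_, ?_⟩⟩
  · intro h
    have hn : ∀ i, ‖lam i‖ < 1 := fun i => by simpa using hlam i
    refine ⟨?_, ?_⟩
    · obtain ⟨ε, hε, h1⟩ := ci_two_one lam hlam hdist h
      refine ⟨ε, hε, fun i j hij => ?_⟩
      simpa using h1 i {j} (by simpa using hij)
    · obtain ⟨M, hM, hw⟩ := ci_uniform lam hlam h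
      exact ⟨M ^ 2, by positivity, fun F a => ci_gram_norm lam hn M hM hw F a⟩
  · rintro ⟨⟨δ, hδ, hsep⟩, M, hM, hG⟩
    have hn : ∀ i, ‖lam i‖ < 1 := fun i => by simpa using hlam i
    exact fun w hw => ci_one_two lam hlam hdist
      (ci_three_one lam hn δ hδ hsep M hM fun F a => hG F a) w hw
end

section
/- (Berndtsson–Chang–Lin) Let d ≥ 2 and let {λ_i}_{i=1}^∞ be a sequence of distinct points in 𝔻^d. Consider the statements: (1) there exists ε > 0 such that ∏_{j ≠ i} ρ(λ_i, λ_j) ≥ ε for every i; (2) the sequence is interpolating for H^∞(𝔻^d), i.e. for every bounded sequence {w_i} ⊂ ℂ there is a bounded analytic φ on 𝔻^d with φ(λ_i) = w_i for all i; (3) the sequence is weakly separated (there exists ε > 0 with ρ(λ_i,λ_j) ≥ ε for all i ≠ j) and the Szegő Grammian G, with entries G_{ij} = k^S(λ_i,λ_j)/√(k^S(λ_i,λ_i) k^S(λ_j,λ_j)), satisfies |∑_{i,j} a_i ā_j G_{ij}| ≤ M ∑_i |a_i|² for some M > 0 and all finitely supported complex sequences {a_i}. Then (1) implies (2) and (2)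 implies (3). -/
open Finset

/-- The open polydisk `𝔻^d` in `ℂ^d`. -/
def Polydisk (d : ℕ) : Set (Fin d → ℂ) := {lam | ∀ r, ‖lam r‖ < 1}

/-- The Gleason distance on the polydisk:
`ρ(ζ,λ) = sup{ |φ(ζ)| : φ analytic on 𝔻^d, sup|φ| ≤ 1, φ(λ) = 0 }`. -/
noncomputable def gleasonDist {d : ℕ} (zeta lam : Fin d → ℂ) : ℝ :=
  sSup {x : ℝ | ∃ φ : (Fin d → ℂ) → ℂ, DifferentiableOn ℂ φ (Polydisk d) ∧
    (∀ mu ∈ Polydisk d, ‖φ mu‖ ≤ 1) ∧ φ lam = 0 ∧ x = ‖φ zeta‖}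

/-- The Szegő kernel of the polydisk: `k^S(ζ,λ) = ∏_r (1 - ζʳ λ̄ʳ)⁻¹`. -/
noncomputable def szegoKernel {d : ℕ} (zeta lam : Fin d → ℂ) : ℂ :=
  ∏ r, (1 - zeta r * starRingEnd ℂ (lam r))⁻¹


open Metric Filter Topology in
/-- Montel-type: ultrafilter limits of bounded holomorphic functions are holomorphic. -/
theorem bcl_ultralimit_diff {ι : Type*} {d : ℕ} (U : Ultrafilter ι) (f : ι → (Fin d → ℂ) → ℂ)
    (g : (Fin d → ℂ) → ℂ) (Ω : Set (Fin d → ℂ)) (hΩ : IsOpen Ω) (C : ℝ)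
    (hf : ∀ n, DifferentiableOn ℂ (f n) Ω) (hb : ∀ n, ∀ z ∈ Ω, ‖f n z‖ ≤ C)
    (hg : ∀ z ∈ Ω, Tendsto (fun n => f n z) U (𝓝 (g z))) : DifferentiableOn ℂ g Ω := by
  intro c hc
  apply DifferentiableAt.differentiableWithinAt
  obtain ⟨R, hR, hball⟩ := Metric.isOpen_iff.1 hΩ c hc
  have hC : 0 ≤ C := by
    obtain ⟨n⟩ : Nonempty ι := U.nonempty_of_neBot
    exact (norm_nonneg _).trans (hb n c hc)
  have hmap : ∀ n, Set.MapsTo (f n) (ball c R) (closedBall (f n c) (2 * C)) := by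
    intro n z hz
    rw [mem_closedBall, dist_eq_norm]
    calc ‖f n z - f n c‖ ≤ ‖f n z‖ + ‖f n c‖ := norm_sub_le _ _
      _ ≤ 2 * C := by linarith [hb n z (hball hz), hb n c hc]
  have hL : ∀ n, ‖fderiv ℂ (f n) c‖ ≤ 2 * C / R := fun n =>
    Complex.norm_fderiv_le_div_of_mapsTo_ball ((hf n).mono hball) (hmap n) hR
  have hda : ∀ n, DifferentiableAt ℂ (f n) c := fun n =>
    (hf n).differentiableAt (hΩ.mem_nhds hc)
  have hquad : ∀ n, ∀ z ∈ ball c R,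
      ‖f n z - f n c - fderiv ℂ (f n) c (z - c)‖ ≤ 4 * C * (dist z c / R) ^ 2 := by
    intro n z hz
    have := Complex.dist_le_mul_div_pow_of_mapsTo_ball_of_isLittleO (n := 1) (c := c) (z := z)
      (f := fun w => f n w - fderiv ℂ (f n) c (w - c)) (R₁ := R) (R₂ := 4 * C)
      (((hf n).mono hball).sub (by fun_prop)) ?_ ?_ hz
    · rw [dist_eq_norm] at this
      simp only [sub_self, map_zero, sub_zero] at this
      rwa [sub_right_comm]
    · intro w hw
      rw [mem_closedBall, dist_eq_norm]
      simp only [sub_self, map_zero, sub_zero]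
      have h1 := hmap n hw
      rw [mem_closedBall, dist_eq_norm] at h1
      have h2 : ‖fderiv ℂ (f n) c (w - c)‖ ≤ 2 * C := by
        refine ((fderiv ℂ (f n) c).le_opNorm _).trans ?_
        have h3 : ‖w - c‖ ≤ R := by rw [← dist_eq_norm]; exact (mem_ball.1 hw).le
        calc ‖fderiv ℂ (f n) c‖ * ‖w - c‖ ≤ (2 * C / R) * R := by
              gcongr
              exact hL n
          _ = 2 * C := by field_simp
      calc ‖f n w - fderiv ℂ (f n) c (w - c) - f n c‖
          = ‖(f n w - f n c) - fderiv ℂ (f n) c (w - c)‖ := by congr 1; ring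
        _ ≤ ‖f n w - f n c‖ + ‖fderiv ℂ (f n) c (w - c)‖ := norm_sub_le _ _
        _ ≤ 4 * C := by linarith
    · have := (hda n).hasFDerivAt.isLittleO
      simp only [sub_self, map_zero, sub_zero, pow_one]
      refine (this.norm_right).congr_left ?_
      intro x
      ring
  have hcomp : IsCompact (closedBall (0 : (Fin d → ℂ) →L[ℂ] ℂ) (2 * C / R)) :=
    isCompact_closedBall _ _
  obtain ⟨L, -, hLt⟩ := hcomp.ultrafilter_le_nhds (U.map fun n => fderiv ℂ (f n) c) (by
    simp only [Ultrafilter.coe_map, le_principal_iff, Filter.mem_map]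
    exact Filter.Eventually.of_forall (fun n => by simpa using hL n))
  have hLt' : Tendsto (fun n => fderiv ℂ (f n) c) U (𝓝 L) := hLt
  have hlim : ∀ z ∈ ball c R, ‖g z - g c - L (z - c)‖ ≤ 4 * C * (dist z c / R) ^ 2 := by
    intro z hz
    have h1 : Tendsto (fun n => fderiv ℂ (f n) c (z - c)) U (𝓝 (L (z - c))) :=
      ((ContinuousLinearMap.apply ℂ ℂ (z - c)).continuous.tendsto L).comp hLt'
    exact le_of_tendsto (((hg z (hball hz)).sub (hg c hc)).sub h1).norm
      (Filter.Eventually.of_forall fun n => hquad n z hz)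
  refine ⟨L, HasFDerivAt.of_isLittleO ?_⟩
  have h2 : (fun z => g z - g c - L (z - c)) =O[𝓝 c] fun z => ‖z - c‖ ^ 2 := by
    refine Asymptotics.IsBigO.of_bound (4 * C / R ^ 2) ?_
    filter_upwards [ball_mem_nhds c hR] with z hz
    refine (hlim z hz).trans_eq ?_
    rw [dist_eq_norm, norm_pow, norm_norm]
    ring
  refine h2.trans_isLittleO ?_
  have h3 : (fun z : Fin d → ℂ => ‖z - c‖ ^ 2) =o[𝓝 c] fun z => ‖z - c‖ ^ 1 := by
    have : Tendsto (fun z => z - c) (𝓝 c) (𝓝 0) := by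
      have h : Continuous fun z : Fin d → ℂ => z - c := by fun_prop
      simpa using h.tendsto c
    exact (Asymptotics.isLittleO_norm_pow_norm_pow (E' := Fin d → ℂ) one_lt_two).comp_tendsto this
  simpa using h3

theorem bcl_isOpen (d : ℕ) : IsOpen (Polydisk d) := by
  have : Polydisk d = ⋂ r, {z : Fin d → ℂ | ‖z r‖ < 1} := by ext; simp [Polydisk]
  rw [this]
  exact isOpen_iInter_of_finite fun r => isOpen_lt (by fun_prop) (by fun_prop)

open Filter Topology in
theorem bcl_montel {d : ℕ} (f : ℕ → (Fin d → ℂ) → ℂ) (C : ℝ)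
    (hf : ∀ n, DifferentiableOn ℂ (f n) (Polydisk d)) (hb : ∀ n, ∀ z ∈ Polydisk d, ‖f n z‖ ≤ C) :
    ∃ g : (Fin d → ℂ) → ℂ, DifferentiableOn ℂ g (Polydisk d) ∧ (∀ z ∈ Polydisk d, ‖g z‖ ≤ C) ∧
      ∀ z ∈ Polydisk d, Tendsto (fun n => f n z) (hyperfilter ℕ) (𝓝 (g z)) := by
  have key : ∀ z, ∃ w : ℂ, z ∈ Polydisk d → (‖w‖ ≤ C ∧
      Tendsto (fun n => f n z) (hyperfilter ℕ) (𝓝 w)) := by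
    intro z
    by_cases hz : z ∈ Polydisk d
    · obtain ⟨w, hw, hwt⟩ := (isCompact_closedBall (0 : ℂ) C).ultrafilter_le_nhds
        ((hyperfilter ℕ).map fun n => f n z) (by
          simp only [Ultrafilter.coe_map, le_principal_iff, Filter.mem_map]
          exact Filter.Eventually.of_forall (fun n => by simpa using hb n z hz))
      exact ⟨w, fun _ => ⟨by simpa using hw, hwt⟩⟩
    · exact ⟨0, fun h => absurd h hz⟩
  choose g hg using key
  exact ⟨g, bcl_ultralimit_diff _ f g _ (bcl_isOpen d) C hf hb (fun z hz => (hg z hz).2),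
    fun z hz => (hg z hz).1, fun z hz => (hg z hz).2⟩

/-- Tournament lemma. -/
theorem bcl_tournament : ∃ C₀ : ℝ, 0 < C₀ ∧ ∀ (F : Finset ℕ) (y : ℕ → ℝ) (K : ℕ → ℕ → Prop)
    [∀ i k, Decidable (K i k)],
    (∀ i, 0 ≤ y i) → (∀ i k, K i k ∨ K k i) →
    ∑ i ∈ F, y i * Real.exp (-∑ k ∈ F with K i k, y k) ≤ C₀ := by
  have hsum : Summable fun n : ℕ => Real.exp 1 * (2 * (n * Real.exp (-(n:ℝ)))) := by
    have := Real.summable_pow_mul_exp_neg_nat_mul 1 (r := 1) one_pos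
    simp only [pow_one, neg_mul, one_mul] at this
    exact (this.mul_left 2).mul_left _
  refine ⟨(∑' n : ℕ, Real.exp 1 * (2 * (n * Real.exp (-(n:ℝ))))) + 1, ?_, ?_⟩
  · have : 0 ≤ ∑' n : ℕ, Real.exp 1 * (2 * (n * Real.exp (-(n:ℝ)))) :=
      tsum_nonneg fun n => by positivity
    linarith
  intro F y K _ hy hK
  set s : ℕ → ℝ := fun i => ∑ k ∈ F with K i k, y k with hs
  have hs0 : ∀ i, 0 ≤ s i := fun i => Finset.sum_nonneg fun k _ => hy k
  -- weight of level sets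
  have hw : ∀ t : ℝ, 0 ≤ t → ∑ i ∈ F with s i ≤ t, y i ≤ 2 * t := by
    intro t ht
    set A := F.filter (fun i => s i ≤ t) with hA
    set W := ∑ i ∈ A, y i with hW
    have hW0 : 0 ≤ W := Finset.sum_nonneg fun k _ => hy k
    have h1 : W * W ≤ ∑ i ∈ A, ∑ k ∈ A, ((if K i k then y i * y k else 0)
        + (if K k i then y k * y i else 0)) := by
      rw [hW, Finset.sum_mul_sum]
      refine Finset.sum_le_sum fun i _ => Finset.sum_le_sum fun k _ => ?_
      have h0 := mul_nonneg (hy i) (hy k)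
      have h0' := mul_nonneg (hy k) (hy i)
      rcases hK i k with h | h
      · rw [if_pos h]; split_ifs <;> linarith
      · rw [if_pos h]; split_ifs <;> linarith [mul_comm (y i) (y k)]
    have h2 : ∑ i ∈ A, ∑ k ∈ A, (if K i k then y i * y k else 0) ≤ t * W := by
      rw [hW, Finset.mul_sum]
      refine Finset.sum_le_sum fun i hi => ?_
      have hi' : s i ≤ t := (Finset.mem_filter.1 hi).2
      calc ∑ k ∈ A, (if K i k then y i * y k else 0)
          ≤ ∑ k ∈ F, (if K i k then y i * y k else 0) := by
            refine Finset.sum_le_sum_of_subset_of_nonneg (Finset.filter_subset _ _) ?_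
            intro k _ _
            split_ifs
            · exact mul_nonneg (hy i) (hy k)
            · exact le_rfl
        _ = y i * s i := by
            rw [hs, Finset.mul_sum, Finset.sum_filter]
        _ ≤ t * y i := by rw [mul_comm]; exact mul_le_mul_of_nonneg_right hi' (hy i)
    have h3 : ∑ i ∈ A, ∑ k ∈ A, (if K k i then y k * y i else 0) ≤ t * W := by
      rw [Finset.sum_comm]; exact h2
    have h4 : W * W ≤ 2 * t * W := by
      simp only [Finset.sum_add_distrib] at h1
      linarith
    rcases hW0.eq_or_lt with h | h
    · rw [← h]; linarith
    · exact le_of_mul_le_mul_right h4 h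
  -- layer decomposition
  set N := ∑ i ∈ F, (⌈s i⌉₊ + 1) with hN
  have h5 : ∀ i ∈ F, y i * Real.exp (-s i) ≤
      ∑ n ∈ Finset.range N, (if s i ≤ n then y i * (Real.exp 1 * Real.exp (-(n:ℝ))) else 0) := by
    intro i hi
    have hmem : ⌈s i⌉₊ ∈ Finset.range N := by
      rw [Finset.mem_range, hN]
      have := Finset.single_le_sum (f := fun i => ⌈s i⌉₊ + 1) (fun _ _ => Nat.zero_le _) hi
      omega
    refine le_trans ?_ (Finset.single_le_sum (f := fun n : ℕ => if s i ≤ n then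
      y i * (Real.exp 1 * Real.exp (-(n:ℝ))) else 0) (fun n _ => ?_) hmem)
    · simp only [Nat.le_ceil, if_true]
      refine mul_le_mul_of_nonneg_left ?_ (hy i)
      rw [← Real.exp_add]
      apply Real.exp_le_exp.2
      have := Nat.ceil_lt_add_one (hs0 i)
      linarith
    · split_ifs
      · have := hy i; positivity
      · exact le_rfl
  calc ∑ i ∈ F, y i * Real.exp (-s i) ≤ ∑ i ∈ F, ∑ n ∈ Finset.range N,
        (if s i ≤ n then y i * (Real.exp 1 * Real.exp (-(n:ℝ))) else 0) := Finset.sum_le_sum h5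
    _ = ∑ n ∈ Finset.range N, (∑ i ∈ F with s i ≤ n, y i) * (Real.exp 1 * Real.exp (-(n:ℝ))) := by
        rw [Finset.sum_comm]
        refine Finset.sum_congr rfl fun n _ => ?_
        rw [Finset.sum_mul, Finset.sum_filter]
    _ ≤ ∑ n ∈ Finset.range N, Real.exp 1 * (2 * (n * Real.exp (-(n:ℝ)))) := by
        refine Finset.sum_le_sum fun n _ => ?_
        have := mul_le_mul_of_nonneg_right (hw n (Nat.cast_nonneg n))
          (show 0 ≤ Real.exp 1 * Real.exp (-(n:ℝ)) by positivity)
        linarith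
    _ ≤ ∑' n : ℕ, Real.exp 1 * (2 * (n * Real.exp (-(n:ℝ)))) :=
        hsum.sum_le_tsum _ fun n _ => by positivity
    _ ≤ _ := by linarith

noncomputable def bclMob (a z : ℂ) : ℂ := (z - a) / (1 - starRingEnd ℂ a * z)

theorem bcl_den_ne {a z : ℂ} (ha : ‖a‖ < 1) (hz : ‖z‖ < 1) : 1 - starRingEnd ℂ a * z ≠ 0 := by
  intro h
  have h1 : starRingEnd ℂ a * z = 1 := by linear_combination -h
  have h2 : ‖starRingEnd ℂ a * z‖ = 1 := by rw [h1]; simp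
  rw [norm_mul, RCLike.norm_conj] at h2
  nlinarith [norm_nonneg a, norm_nonneg z]

theorem bcl_sq_lt {a : ℂ} (ha : ‖a‖ < 1) : ‖a‖ ^ 2 < 1 := by
  nlinarith [norm_nonneg a]

theorem bcl_normSq_id (a z : ℂ) : ‖1 - starRingEnd ℂ a * z‖ ^ 2 - ‖z - a‖ ^ 2 =
    (1 - ‖a‖ ^ 2) * (1 - ‖z‖ ^ 2) := by
  simp only [Complex.sq_norm, Complex.normSq_apply, Complex.sub_re, Complex.sub_im, Complex.mul_re,
    Complex.mul_im, Complex.conj_re, Complex.conj_im, Complex.one_re, Complex.one_im]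
  ring

theorem bcl_mob_sq {a z : ℂ} (ha : ‖a‖ < 1) (hz : ‖z‖ < 1) :
    1 - ‖bclMob a z‖ ^ 2 = (1 - ‖a‖ ^ 2) * (1 - ‖z‖ ^ 2) / ‖1 - starRingEnd ℂ a * z‖ ^ 2 := by
  have h := norm_ne_zero_iff.2 (bcl_den_ne ha hz)
  rw [bclMob, norm_div, div_pow, ← bcl_normSq_id, sub_div, div_self (pow_ne_zero 2 h)]

theorem bcl_mob_lt {a z : ℂ} (ha : ‖a‖ < 1) (hz : ‖z‖ < 1) : ‖bclMob a z‖ < 1 := by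
  have h := norm_pos_iff.2 (bcl_den_ne ha hz)
  have h1 := bcl_mob_sq ha hz
  have h2 : 0 < (1 - ‖a‖ ^ 2) * (1 - ‖z‖ ^ 2) / ‖1 - starRingEnd ℂ a * z‖ ^ 2 := by
    have := bcl_sq_lt ha
    have := bcl_sq_lt hz
    exact div_pos (mul_pos (by linarith) (by linarith)) (by positivity)
  nlinarith [norm_nonneg (bclMob a z)]

theorem bcl_mob_symm (a z : ℂ) : ‖bclMob a z‖ = ‖bclMob z a‖ := by
  rw [bclMob, bclMob, norm_div, norm_div, norm_sub_rev]
  congr 1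
  rw [← RCLike.norm_conj]
  congr 1
  simp [mul_comm]

theorem bcl_mob_self (a : ℂ) : bclMob a a = 0 := by simp [bclMob]

theorem bcl_mob_inv {a z : ℂ} (ha : ‖a‖ < 1) (hz : ‖z‖ < 1) : bclMob (-a) (bclMob a z) = z := by
  have h := bcl_den_ne ha hz
  have h2 := bcl_den_ne ha ha
  have h3 : (1 - starRingEnd ℂ a * z) + starRingEnd ℂ a * (z - a) ≠ 0 := by
    convert h2 using 1; ring
  have h4 : 1 - starRingEnd ℂ (-a) * bclMob a z = (1 - starRingEnd ℂ a * a) / (1 - starRingEnd ℂ a * z) := by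
    rw [bclMob, map_neg]; field_simp; ring
  have h5 : bclMob a z - (-a) = z * (1 - starRingEnd ℂ a * a) / (1 - starRingEnd ℂ a * z) := by
    rw [bclMob, eq_div_iff h, sub_mul, div_mul_cancel₀ _ h]; ring
  have h6 : bclMob (-a) (bclMob a z) = (bclMob a z - (-a)) / (1 - starRingEnd ℂ (-a) * bclMob a z) := rfl
  rw [h6, h4, h5, div_div_div_cancel_right₀ h, mul_div_cancel_right₀ _ h2]

theorem bcl_mob_diff {a : ℂ} (ha : ‖a‖ < 1) {z : ℂ} (hz : ‖z‖ < 1) :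
    DifferentiableAt ℂ (bclMob a) z := by
  unfold bclMob
  exact DifferentiableAt.div (by fun_prop) (by fun_prop) (bcl_den_ne ha hz)

theorem bcl_ker_le {a z : ℂ} (ha : ‖a‖ < 1) (hz : ‖z‖ < 1) :
    (1 - ‖a‖ ^ 2) / ‖1 - starRingEnd ℂ a * z‖ ≤ 2 := by
  have h := norm_pos_iff.2 (bcl_den_ne ha hz)
  rw [div_le_iff₀ h]
  have h1 : 1 - ‖a‖ ≤ ‖1 - starRingEnd ℂ a * z‖ := by
    have h2 := norm_sub_norm_le 1 (starRingEnd ℂ a * z)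
    rw [norm_mul, RCLike.norm_conj, norm_one] at h2
    nlinarith [norm_nonneg a]
  nlinarith [norm_nonneg a]

/-- the exponent function -/
noncomputable def bclExpo (a z : ℂ) : ℂ :=
  ((1 - ‖a‖ ^ 2 : ℝ) : ℂ) * ((1 + starRingEnd ℂ a * z) / (1 - starRingEnd ℂ a * z))

theorem bcl_expo_re {a z : ℂ} : (bclExpo a z).re =
    (1 - ‖a‖ ^ 2) * (1 - ‖a‖ ^ 2 * ‖z‖ ^ 2) / ‖1 - starRingEnd ℂ a * z‖ ^ 2 := by
  rw [bclExpo, Complex.re_ofReal_mul, mul_div_assoc]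
  congr 1
  rw [Complex.div_re, ← add_div, Complex.sq_norm, Complex.sq_norm, Complex.sq_norm]
  congr 1
  simp only [Complex.normSq_apply, Complex.sub_re, Complex.sub_im, Complex.mul_re, Complex.add_re, Complex.add_im,
    Complex.mul_im, Complex.conj_re, Complex.conj_im, Complex.one_re, Complex.one_im]
  ring

theorem bcl_expo_ge {a z : ℂ} (ha : ‖a‖ < 1) (hz : ‖z‖ < 1) :
    ((1 - ‖a‖ ^ 2) / ‖1 - starRingEnd ℂ a * z‖) ^ 2 ≤ (bclExpo a z).re := by
  rw [bcl_expo_re, div_pow, sq (1 - ‖a‖ ^ 2)]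
  have := bcl_sq_lt ha
  have := bcl_sq_lt hz
  gcongr
  nlinarith [sq_nonneg ‖a‖]

theorem bcl_expo_le {a z : ℂ} (ha : ‖a‖ < 1) (hz : ‖z‖ < 1) (hza : ‖z‖ ≤ ‖a‖) :
    (bclExpo a z).re ≤ 2 * (1 - ‖bclMob a z‖ ^ 2) := by
  rw [bcl_expo_re, bcl_mob_sq ha hz, ← mul_div_assoc]
  have h1 := bcl_sq_lt ha
  have h2 := bcl_sq_lt hz
  have h3 : ‖z‖ ^ 2 ≤ ‖a‖ ^ 2 := by gcongr
  gcongr ?_ / _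
  have : 1 - ‖a‖ ^ 2 * ‖z‖ ^ 2 ≤ 2 * (1 - ‖z‖ ^ 2) := by nlinarith [sq_nonneg ‖z‖]
  nlinarith

theorem bcl_expo_diff {a : ℂ} (ha : ‖a‖ < 1) {z : ℂ} (hz : ‖z‖ < 1) :
    DifferentiableAt ℂ (bclExpo a) z := by
  unfold bclExpo
  have h : DifferentiableAt ℂ (fun z => (1 + starRingEnd ℂ a * z) / (1 - starRingEnd ℂ a * z)) z :=
    DifferentiableAt.div (by fun_prop) (by fun_prop) (bcl_den_ne ha hz)
  exact h.const_mul _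

open Metric in
theorem bcl_gleason_le {d : ℕ} {zeta lam : Fin d → ℂ} (hz : zeta ∈ Polydisk d)
    (hl : lam ∈ Polydisk d) {m : ℝ} (hm0 : 0 < m) (hm1 : m < 1)
    (hm : ∀ s, ‖bclMob (lam s) (zeta s)‖ ≤ m) : gleasonDist zeta lam ≤ m := by
  refine Real.sSup_le ?_ hm0.le
  rintro x ⟨φ, hφ, hb, h0, rfl⟩
  set g : ℂ → Fin d → ℂ := fun t r => bclMob (-lam r) (t * (bclMob (lam r) (zeta r) / m)) with hg
  have hin : ∀ r, ∀ t : ℂ, ‖t‖ < 1 → ‖t * (bclMob (lam r) (zeta r) / m)‖ < 1 := by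
    intro r t ht
    rw [norm_mul, norm_div, Complex.norm_real, Real.norm_of_nonneg hm0.le]
    have : ‖bclMob (lam r) (zeta r)‖ / m ≤ 1 := (div_le_one hm0).2 (hm r)
    nlinarith [norm_nonneg t]
  have hneg : ∀ r, ‖-lam r‖ < 1 := fun r => by rw [norm_neg]; exact hl r
  have hgm : ∀ t : ℂ, ‖t‖ < 1 → g t ∈ Polydisk d := fun t ht r => bcl_mob_lt (hneg r) (hin r t ht)
  have hgd : ∀ t : ℂ, ‖t‖ < 1 → DifferentiableAt ℂ g t := by
    intro t ht
    rw [differentiableAt_pi]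
    intro r
    exact (bcl_mob_diff (hneg r) (hin r t ht)).comp t
      (f := fun t => t * (bclMob (lam r) (zeta r) / m)) (by fun_prop)
  have hg0 : g 0 = lam := by
    ext r; simp [hg, bclMob]
  have hgmz : g m = zeta := by
    ext r
    have : (m : ℂ) * (bclMob (lam r) (zeta r) / m) = bclMob (lam r) (zeta r) := by
      have : (m : ℂ) ≠ 0 := by exact_mod_cast hm0.ne'
      field_simp
    simp only [hg, this]
    exact bcl_mob_inv (hl r) (hz r)
  have hnm : ‖(m : ℂ)‖ = m := by rw [Complex.norm_real, Real.norm_of_nonneg hm0.le]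
  have := Complex.norm_le_norm_of_mapsTo_ball (f := fun t => φ (g t)) (R := 1) (z := (m : ℂ))
    (fun t ht => by
      have ht' : ‖t‖ < 1 := by simpa using ht
      exact (((hφ.differentiableAt ((bcl_isOpen d).mem_nhds (hgm t ht'))).comp t
        (hgd t ht'))).differentiableWithinAt)
    (fun t ht => by
      have ht' : ‖t‖ < 1 := by simpa using ht
      simpa using hb _ (hgm t ht')) (by simp only [hg0, h0]) (by rw [hnm]; exact hm1)
  simpa only [hgmz, hnm] using this

theorem bcl_diff_prod {ι E : Type*} [NormedAddCommGroup E] [NormedSpace ℂ E]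
    (s : Finset ι) (f : ι → E → ℂ) (z : E) (h : ∀ i ∈ s, DifferentiableAt ℂ (f i) z) :
    DifferentiableAt ℂ (fun z => ∏ i ∈ s, f i z) z := by
  classical
  induction s using Finset.induction_on with
  | empty => simp
  | insert a s ha ih =>
    simp only [Finset.prod_insert ha]
    exact (h a (Finset.mem_insert_self _ _)).mul
      (ih fun i hi => h i (Finset.mem_insert_of_mem hi))

open Classical in
theorem bcl_building {d : ℕ} (hd : 0 < d) (lam : ℕ → Fin d → ℂ)
    (hlam : ∀ i, lam i ∈ Polydisk d) (hdist : Function.Injective lam) {ε : ℝ} (hε : 0 < ε)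
    (h1 : ∀ i : ℕ, ∀ F : Finset ℕ, i ∉ F → ε ≤ ∏ j ∈ F, gleasonDist (lam i) (lam j))
    (F : Finset ℕ) :
    ∃ (g : ℕ → (Fin d → ℂ) → ℂ) (y : (Fin d → ℂ) → ℕ → ℝ) (K : ℕ → ℕ → Prop),
      (∀ i k, K i k ∨ K k i) ∧ (∀ z ∈ Polydisk d, ∀ i, 0 ≤ y z i) ∧
      (∀ i, DifferentiableOn ℂ (g i) (Polydisk d)) ∧
      (∀ z ∈ Polydisk d, ∀ i, ‖g i z‖ ≤
        4 ^ d * (y z i * Real.exp (-∑ k ∈ F with K i k, y z k))) ∧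
      (∀ i, ∀ j ∈ F, j ≠ i → g i (lam j) = 0) ∧
      (∀ i ∈ F, ε ^ 5 * Real.exp (-2) ≤ ‖g i (lam i)‖) := by
  have : Nonempty (Fin d) := ⟨⟨0, hd⟩⟩
  set m : Fin d → ℕ → ℕ → ℝ := fun r i k => ‖bclMob (lam k r) (lam i r)‖ with hm
  have hmsymm : ∀ r i k, m r i k = m r k i := fun r i k => bcl_mob_symm _ _
  have hm0 : ∀ r i k, 0 ≤ m r i k := fun r i k => norm_nonneg _
  have hm1 : ∀ r i k, m r i k < 1 := fun r i k => bcl_mob_lt (hlam k r) (hlam i r)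
  have hmax : ∀ i k, ∃ r, ∀ s, m s i k ≤ m r i k := fun i k => Finite.exists_max fun s => m s i k
  choose q hq using hmax
  obtain ⟨K, hK⟩ : ∃ K : ℕ → ℕ → Prop, ∀ i k, K i k ↔
      ∃ r, (∀ s, m s i k ≤ m r i k) ∧ ‖lam i r‖ ≤ ‖lam k r‖ := ⟨_, fun _ _ => Iff.rfl⟩
  have hKr : ∀ i k, ∃ r, (∀ s, m s i k ≤ m r i k) ∧ (K i k → ‖lam i r‖ ≤ ‖lam k r‖) := by
    intro i k
    by_cases h : K i k
    · obtain ⟨r, hr⟩ := (hK i k).1 h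
      exact ⟨r, hr.1, fun _ => hr.2⟩
    · exact ⟨q i k, hq i k, fun h' => absurd h' h⟩
  choose R hRmax hRle using hKr
  have hgl : ∀ i k r, i ≠ k → (∀ s, m s i k ≤ m r i k) → gleasonDist (lam i) (lam k) ≤ m r i k := by
    intro i k r hik hr
    refine bcl_gleason_le (hlam i) (hlam k) ?_ (hm1 _ _ _) hr
    rcases (hm0 r i k).eq_or_lt with h | h
    · exfalso
      apply hik
      apply hdist
      ext s
      have h2 : m s i k = 0 := le_antisymm ((hr s).trans h.symm.le) (hm0 _ _ _)
      have h3 : bclMob (lam k s) (lam i s) = 0 := norm_eq_zero.1 h2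
      rw [bclMob, div_eq_zero_iff] at h3
      rcases h3 with h3 | h3
      · exact sub_eq_zero.1 h3
      · exact absurd h3 (bcl_den_ne (hlam k s) (hlam i s))
    · exact h
  have hgl0 : ∀ z w : Fin d → ℂ, 0 ≤ gleasonDist z w := by
    intro z w
    refine Real.sSup_nonneg ?_
    rintro x ⟨φ, -, -, -, rfl⟩
    exact norm_nonneg _
  have hprod : ∀ i (r : ℕ → Fin d) (G : Finset ℕ), (∀ k, ∀ s, m s i k ≤ m (r k) i k) → i ∉ G →
      ε ≤ ∏ k ∈ G, m (r k) i k := by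
    intro i r G hr hi
    refine (h1 i G hi).trans (Finset.prod_le_prod (fun _ _ => hgl0 _ _) fun k hk => ?_)
    exact hgl i k (r k) (fun h => hi (h ▸ hk)) (hr k)
  set kap : ℕ → (Fin d → ℂ) → Fin d → ℝ := fun i z r =>
    (1 - ‖lam i r‖ ^ 2) / ‖1 - starRingEnd ℂ (lam i r) * z r‖ with hkap
  have hkap0 : ∀ i z r, 0 ≤ kap i z r := by
    intro i z r
    have := bcl_sq_lt (hlam i r)
    exact div_nonneg (by linarith) (norm_nonneg _)
  have hkap2 : ∀ i, ∀ z ∈ Polydisk d, ∀ r, kap i z r ≤ 2 := fun i z hz r => bcl_ker_le (hlam i r) (hz r)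
  set y : (Fin d → ℂ) → ℕ → ℝ := fun z i => ∏ r, (kap i z r / 2) ^ 2 with hy
  have hyle : ∀ z ∈ Polydisk d, ∀ i r, y z i ≤ kap i z r ^ 2 := by
    intro z hz i r
    have h2 : y z i = (kap i z r / 2) ^ 2 * ∏ s ∈ Finset.univ.erase r, (kap i z s / 2) ^ 2 :=
      (Finset.mul_prod_erase _ _ (Finset.mem_univ r)).symm
    have h3 : ∏ s ∈ Finset.univ.erase r, (kap i z s / 2) ^ 2 ≤ 1 := by
      refine Finset.prod_le_one (fun s _ => sq_nonneg _) fun s _ => ?_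
      have := hkap0 i z s
      have := hkap2 i z hz s
      exact pow_le_one₀ (by linarith) (by linarith)
    rw [h2]
    calc _ ≤ (kap i z r / 2) ^ 2 * 1 := by gcongr
      _ ≤ kap i z r ^ 2 := by nlinarith [sq_nonneg (kap i z r)]
  set B : ℕ → (Fin d → ℂ) → ℂ := fun i z =>
    ∏ j ∈ F.erase i, bclMob (lam j (q i j)) (z (q i j)) with hB
  set p : ℕ → (Fin d → ℂ) → ℂ := fun i z =>
    ∏ r, (((1 - ‖lam i r‖ ^ 2 : ℝ) : ℂ) / (1 - starRingEnd ℂ (lam i r) * z r)) ^ 2 with hp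
  set E : ℕ → (Fin d → ℂ) → ℂ := fun i z =>
    ∑ k ∈ F with K i k, bclExpo (lam k (R i k)) (z (R i k)) with hE
  have hnp : ∀ i z, ‖p i z‖ = ∏ r, kap i z r ^ 2 := by
    intro i z
    simp only [hp, hkap, norm_prod, norm_pow, norm_div, Complex.norm_real]
    refine Finset.prod_congr rfl fun r _ => ?_
    have := bcl_sq_lt (hlam i r)
    rw [Real.norm_of_nonneg (by linarith)]
  have hnp2 : ∀ i z, ‖p i z‖ = 4 ^ d * y z i := by
    intro i z
    rw [hnp, hy]
    have : (4 : ℝ) ^ d = ∏ r : Fin d, 4 := by simp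
    rw [this, ← Finset.prod_mul_distrib]
    refine Finset.prod_congr rfl fun r _ => by ring
  refine ⟨fun i z => B i z * p i z * Complex.exp (-E i z), y, K, ?_, ?_, ?_, ?_, ?_, ?_⟩
  · intro i k
    rcases le_total ‖lam i (q i k)‖ ‖lam k (q i k)‖ with h | h
    · exact Or.inl ((hK i k).2 ⟨q i k, hq i k, h⟩)
    · refine Or.inr ((hK k i).2 ⟨q i k, fun s => ?_, h⟩)
      rw [hmsymm s k i, hmsymm _ k i]
      exact hq i k s
  · intro z _ i
    exact Finset.prod_nonneg fun r _ => sq_nonneg _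
  · intro i z hz
    apply DifferentiableAt.differentiableWithinAt
    have hBd : DifferentiableAt ℂ (B i) z := by
      have h : ∀ j ∈ F.erase i, DifferentiableAt ℂ
          (fun z : Fin d → ℂ => bclMob (lam j (q i j)) (z (q i j))) z := fun j _ => (bcl_mob_diff (hlam j (q i j)) (hz (q i j))).comp z (f := fun z : Fin d → ℂ => z (q i j)) (by fun_prop)
      exact bcl_diff_prod _ _ _ h
    have hpd : DifferentiableAt ℂ (p i) z := by
      have h : ∀ r ∈ (Finset.univ : Finset (Fin d)), DifferentiableAt ℂ (fun z : Fin d → ℂ =>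
          (((1 - ‖lam i r‖ ^ 2 : ℝ) : ℂ) / (1 - starRingEnd ℂ (lam i r) * z r)) ^ 2) z :=
        fun r _ => by
          have h3 : DifferentiableAt ℂ (fun z : Fin d → ℂ =>
            ((1 - ‖lam i r‖ ^ 2 : ℝ) : ℂ) / (1 - starRingEnd ℂ (lam i r) * z r)) z :=
            by
              simp only [div_eq_mul_inv]
              have h4 : DifferentiableAt ℂ (fun z : Fin d → ℂ =>
                1 - starRingEnd ℂ (lam i r) * z r) z := by fun_prop
              exact (h4.fun_inv (bcl_den_ne (hlam i r) (hz r))).const_mul _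
          exact h3.pow 2
      exact bcl_diff_prod _ _ _ h
    have hEd : DifferentiableAt ℂ (E i) z := by
      refine DifferentiableAt.fun_sum fun k _ => ?_
      exact (bcl_expo_diff (hlam k (R i k)) (hz (R i k))).comp z (f := fun z : Fin d → ℂ => z (R i k)) (by fun_prop)
    exact (hBd.mul hpd).mul hEd.neg.cexp
  · intro z hz i
    rw [norm_mul, norm_mul, hnp2, Complex.norm_exp]
    have hB1 : ‖B i z‖ ≤ 1 := by
      rw [hB, norm_prod]
      exact Finset.prod_le_one (fun _ _ => norm_nonneg _)
        fun j _ => (bcl_mob_lt (hlam j (q i j)) (hz (q i j))).le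
    have hE1 : Real.exp (-E i z).re ≤ Real.exp (-∑ k ∈ F with K i k, y z k) := by
      apply Real.exp_le_exp.2
      rw [Complex.neg_re, hE, Complex.re_sum]
      apply neg_le_neg
      refine Finset.sum_le_sum fun k _ => ?_
      exact (hyle z hz k (R i k)).trans (bcl_expo_ge (hlam k (R i k)) (hz (R i k)))
    have hy0 : 0 ≤ y z i := Finset.prod_nonneg fun r _ => sq_nonneg _
    calc ‖B i z‖ * (4 ^ d * y z i) * Real.exp (-E i z).re
        ≤ 1 * (4 ^ d * y z i) * Real.exp (-∑ k ∈ F with K i k, y z k) := by gcongr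
      _ = _ := by ring
  · intro i j hj hji
    have : B i (lam j) = 0 :=
      Finset.prod_eq_zero (Finset.mem_erase.2 ⟨hji, hj⟩) (bcl_mob_self _)
    simp [this]
  · intro i hi
    rw [norm_mul, norm_mul, Complex.norm_exp]
    have hp1 : ‖p i (lam i)‖ = 1 := by
      rw [hnp]
      refine Finset.prod_eq_one fun r _ => ?_
      have h2 := bcl_sq_lt (hlam i r)
      have h3 : (1 - starRingEnd ℂ (lam i r) * lam i r) = ((1 - ‖lam i r‖ ^ 2 : ℝ) : ℂ) := by
        rw [Complex.conj_mul']; push_cast; rfl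
      simp only [hkap, h3, Complex.norm_real]
      rw [Real.norm_of_nonneg (by linarith), div_self (by linarith), one_pow]
    have hB1 : ε ≤ ‖B i (lam i)‖ := by
      rw [hB, norm_prod]
      exact hprod i (q i) _ (hq i) (Finset.notMem_erase _ _)
    set G := (F.filter (K i)).erase i with hG
    have hE1 : (E i (lam i)).re ≤ 2 + 2 * ∑ k ∈ G, (1 - m (R i k) i k ^ 2) := by
      have h2 : (E i (lam i)).re ≤ ∑ k ∈ F with K i k, 2 * (1 - m (R i k) i k ^ 2) := by
        rw [hE, Complex.re_sum]
        refine Finset.sum_le_sum fun k hk => ?_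
        exact bcl_expo_le (hlam k (R i k)) (hlam i (R i k)) (hRle i k (Finset.mem_filter.1 hk).2)
      have hii : i ∈ F.filter (K i) := Finset.mem_filter.2 ⟨hi, (hK i i).2 ⟨q i i, hq i i, le_rfl⟩⟩
      rw [← Finset.add_sum_erase _ _ hii, ← Finset.mul_sum] at h2
      have : m (R i i) i i = 0 := by simp [hm, bcl_mob_self]
      rw [this] at h2
      linarith
    have hE2 : ε ^ 2 ≤ Real.exp (-∑ k ∈ G, (1 - m (R i k) i k ^ 2)) := by
      have h2 := hprod i (R i) G (hRmax i) (Finset.notMem_erase _ _)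
      calc ε ^ 2 ≤ (∏ k ∈ G, m (R i k) i k) ^ 2 := by gcongr
        _ = ∏ k ∈ G, m (R i k) i k ^ 2 := (Finset.prod_pow _ _ _).symm
        _ ≤ ∏ k ∈ G, Real.exp (-(1 - m (R i k) i k ^ 2)) := by
            refine Finset.prod_le_prod (fun _ _ => sq_nonneg _) fun k _ => ?_
            have := Real.add_one_le_exp (-(1 - m (R i k) i k ^ 2))
            linarith
        _ = _ := by rw [← Real.exp_sum, Finset.sum_neg_distrib]
    have hE3 : Real.exp (-2) * ε ^ 4 ≤ Real.exp (-E i (lam i)).re := by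
      calc Real.exp (-2) * ε ^ 4 = Real.exp (-2) * (ε ^ 2) ^ 2 := by ring
        _ ≤ Real.exp (-2) * Real.exp (-∑ k ∈ G, (1 - m (R i k) i k ^ 2)) ^ 2 := by gcongr
        _ = Real.exp (-(2 + 2 * ∑ k ∈ G, (1 - m (R i k) i k ^ 2))) := by
            rw [sq, ← Real.exp_add, ← Real.exp_add]; congr 1; ring
        _ ≤ _ := by
            apply Real.exp_le_exp.2
            rw [Complex.neg_re]; linarith
    rw [hp1, mul_one]
    calc ε ^ 5 * Real.exp (-2) = ε * (Real.exp (-2) * ε ^ 4) := by ring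
      _ ≤ _ := by gcongr

open Classical Filter Topology in
theorem bcl_one_two {d : ℕ} (hd : 0 < d) (lam : ℕ → Fin d → ℂ)
    (hlam : ∀ i, lam i ∈ Polydisk d) (hdist : Function.Injective lam) {ε : ℝ} (hε : 0 < ε)
    (h1 : ∀ i : ℕ, ∀ F : Finset ℕ, i ∉ F → ε ≤ ∏ j ∈ F, gleasonDist (lam i) (lam j))
    (w : ℕ → ℂ) (Cw : ℝ) (hw : ∀ i, ‖w i‖ ≤ Cw) :
    ∃ φ : (Fin d → ℂ) → ℂ, DifferentiableOn ℂ φ (Polydisk d) ∧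
          (∃ Cφ : ℝ, ∀ z ∈ Polydisk d, ‖φ z‖ ≤ Cφ) ∧
          ∀ i, φ (lam i) = w i := by
  obtain ⟨C₀, hC₀, htour⟩ := bcl_tournament
  have hCw : 0 ≤ Cw := (norm_nonneg _).trans (hw 0)
  set c := ε ^ 5 * Real.exp (-2) with hc
  have hc0 : 0 < c := by positivity
  have hfin : ∀ N : ℕ, ∃ φ : (Fin d → ℂ) → ℂ, DifferentiableOn ℂ φ (Polydisk d) ∧
      (∀ z ∈ Polydisk d, ‖φ z‖ ≤ Cw / c * (4 ^ d * C₀)) ∧ ∀ i < N, φ (lam i) = w i := by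
    intro N
    obtain ⟨g, y, K, hK, hy, hgd, hgb, hg0, hgc⟩ :=
      bcl_building hd lam hlam hdist hε h1 (Finset.range N)
    refine ⟨fun z => ∑ i ∈ Finset.range N, (w i / g i (lam i)) * g i z, ?_, ?_, ?_⟩
    · exact DifferentiableOn.fun_sum fun i _ => (hgd i).const_mul _
    · intro z hz
      calc ‖∑ i ∈ Finset.range N, (w i / g i (lam i)) * g i z‖
          ≤ ∑ i ∈ Finset.range N, ‖(w i / g i (lam i)) * g i z‖ := norm_sum_le _ _
        _ ≤ ∑ i ∈ Finset.range N, Cw / c * (4 ^ d * (y z i *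
              Real.exp (-∑ k ∈ Finset.range N with K i k, y z k))) := by
            refine Finset.sum_le_sum fun i hi => ?_
            rw [norm_mul, norm_div]
            have h2 := hgc i hi
            have h3 := hw i
            have h4 := hgb z hz i
            gcongr
        _ = Cw / c * (4 ^ d * ∑ i ∈ Finset.range N, y z i *
              Real.exp (-∑ k ∈ Finset.range N with K i k, y z k)) := by
            rw [Finset.mul_sum, Finset.mul_sum]
        _ ≤ _ := by
            have := htour (Finset.range N) (y z) K (hy z hz) hK
            gcongr
    · intro i hi
      have hi' := Finset.mem_range.2 hi
      have hne : g i (lam i) ≠ 0 := by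
        have := hgc i hi'
        intro h
        rw [h, norm_zero] at this
        linarith
      change ∑ j ∈ Finset.range N, (w j / g j (lam j)) * g j (lam i) = w i
      rw [Finset.sum_eq_single_of_mem i hi' fun j _ hj => by
        rw [hg0 j i hi' hj.symm, mul_zero]]
      field_simp
  choose φ hφd hφb hφi using hfin
  obtain ⟨g, hgd, hgb, hgt⟩ := bcl_montel φ _ hφd hφb
  refine ⟨g, hgd, ⟨_, hgb⟩, fun i => ?_⟩
  refine tendsto_nhds_unique (hgt _ (hlam i)) ?_
  refine tendsto_const_nhds.congr' ?_
  have : ∀ᶠ N in atTop, w i = φ N (lam i) := by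
    filter_upwards [eventually_gt_atTop i] with N hN using (hφi N i hN).symm
  rw [← Nat.cofinite_eq_atTop] at this
  exact hyperfilter_le_cofinite this

open BoundedContinuousFunction Filter Topology in
theorem bcl_uniform {d : ℕ} (lam : ℕ → Fin d → ℂ) (hlam : ∀ i, lam i ∈ Polydisk d)
    (h2 : ∀ w : ℕ → ℂ, (∃ Cw : ℝ, ∀ i, ‖w i‖ ≤ Cw) →
        ∃ φ : (Fin d → ℂ) → ℂ, DifferentiableOn ℂ φ (Polydisk d) ∧
          (∃ Cφ : ℝ, ∀ z ∈ Polydisk d, ‖φ z‖ ≤ Cφ) ∧ ∀ i, φ (lam i) = w i) :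
    ∃ M > (0:ℝ), ∀ w : ℕ → ℂ, (∀ i, ‖w i‖ ≤ 1) →
      ∃ φ : (Fin d → ℂ) → ℂ, DifferentiableOn ℂ φ (Polydisk d) ∧
        (∀ z ∈ Polydisk d, ‖φ z‖ ≤ M) ∧ ∀ i, φ (lam i) = w i := by
  set X := {z : Fin d → ℂ // z ∈ Polydisk d} with hX
  let H : Submodule ℂ (X →ᵇ ℂ) :=
    { carrier := {f | ∃ φ : (Fin d → ℂ) → ℂ, DifferentiableOn ℂ φ (Polydisk d) ∧
        ∀ x : X, φ x.1 = f x}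
      add_mem' := by
        rintro f g ⟨φ, hφ, hf⟩ ⟨ψ, hψ, hg⟩
        exact ⟨fun z => φ z + ψ z, hφ.add hψ, fun x => by simp [hf, hg]⟩
      zero_mem' := ⟨fun _ => 0, by fun_prop, fun x => rfl⟩
      smul_mem' := by
        rintro c f ⟨φ, hφ, hf⟩
        exact ⟨fun z => c * φ z, hφ.const_mul c, fun x => by simp [hf]⟩ }
  have hclosed : IsClosed (H : Set (X →ᵇ ℂ)) := by
    apply IsSeqClosed.isClosed
    intro f g hf hg
    choose φ hφ hφf using hf
    obtain ⟨C, hC⟩ : ∃ C, ∀ n, ‖f n‖ ≤ C := by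
      obtain ⟨C, hC⟩ := hg.norm.bddAbove_range
      exact ⟨C, fun n => hC ⟨n, rfl⟩⟩
    obtain ⟨ψ, hψd, -, hψt⟩ := bcl_montel φ C hφ (fun n z hz => by
      rw [hφf n ⟨z, hz⟩]
      exact ((f n).norm_coe_le_norm _).trans (hC n))
    refine ⟨ψ, hψd, fun x => ?_⟩
    refine tendsto_nhds_unique (hψt x.1 x.2) ?_
    have h3 : Tendsto (fun n => f n x) atTop (𝓝 (g x)) :=
      ((BoundedContinuousFunction.lipschitz_eval_const (β := ℂ) x).continuous.tendsto g).comp hg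
    have h4 : (fun n => φ n x.1) = fun n => f n x := funext fun n => hφf n x
    rw [h4]
    refine h3.mono_left ?_
    rw [← Nat.cofinite_eq_atTop]
    exact hyperfilter_le_cofinite
  have : CompleteSpace H := hclosed.completeSpace_coe
  let e : C(ℕ, X) := ⟨fun n => ⟨lam n, hlam n⟩, continuous_of_discreteTopology⟩
  let T0 : H →ₗ[ℂ] (ℕ →ᵇ ℂ) :=
    { toFun := fun f => (f : X →ᵇ ℂ).compContinuous e
      map_add' := fun f g => by ext n; simp
      map_smul' := fun c f => by ext n; simp }
  let T : H →L[ℂ] (ℕ →ᵇ ℂ) := T0.mkContinuous 1 (fun f => by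
    rw [one_mul]
    refine (BoundedContinuousFunction.norm_le (norm_nonneg _)).2 fun n => ?_
    exact (f : X →ᵇ ℂ).norm_coe_le_norm _)
  have hT : ∀ (f : H) n, T f n = (f : X →ᵇ ℂ) ⟨lam n, hlam n⟩ := fun f n => rfl
  have hsurj : Function.Surjective T := by
    intro w
    obtain ⟨φ, hφ, ⟨C, hC⟩, hi⟩ := h2 w ⟨‖w‖, fun i => w.norm_coe_le_norm i⟩
    let f : X →ᵇ ℂ := BoundedContinuousFunction.ofNormedAddCommGroup (fun x => φ x.1)
      (continuousOn_iff_continuous_domRestrict.1 hφ.continuousOn) C (fun x => hC x.1 x.2)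
    refine ⟨⟨f, φ, hφ, fun x => rfl⟩, ?_⟩
    ext n
    rw [hT]
    exact hi n
  obtain ⟨C, hC, hpre⟩ := T.exists_preimage_norm_le hsurj
  refine ⟨C, hC, fun w hw => ?_⟩
  let w' : ℕ →ᵇ ℂ := BoundedContinuousFunction.ofNormedAddCommGroup w
    continuous_of_discreteTopology 1 hw
  obtain ⟨⟨f, φ, hφ, hφf⟩, hf, hfn⟩ := hpre w'
  have hw' : ‖w'‖ ≤ 1 := (BoundedContinuousFunction.norm_le zero_le_one).2 hw
  refine ⟨φ, hφ, fun z hz => ?_, fun i => ?_⟩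
  · rw [hφf ⟨z, hz⟩]
    refine (f.norm_coe_le_norm _).trans ?_
    have : ‖f‖ ≤ C * ‖w'‖ := hfn
    nlinarith
  · rw [hφf ⟨lam i, hlam i⟩]
    have := congrArg (fun g : ℕ →ᵇ ℂ => g i) hf
    exact this

/-- choice of signs -/
theorem bcl_signs (B : ℕ → ℕ → ℝ) (S : Finset ℕ) : ∃ σ : ℕ → ℝ, (∀ i, σ i = 1 ∨ σ i = -1) ∧
    ∑ i ∈ S, ∑ j ∈ S, σ i * σ j * B i j ≤ ∑ i ∈ S, B i i := by
  induction S using Finset.induction_on with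
  | empty => exact ⟨fun _ => 1, fun _ => Or.inl rfl, by simp⟩
  | insert a S ha ih =>
    obtain ⟨σ, hσ, hs⟩ := ih
    set L := ∑ j ∈ S, σ j * (B a j + B j a) with hL
    obtain ⟨t, ht, htL⟩ : ∃ t : ℝ, (t = 1 ∨ t = -1) ∧ t * L ≤ 0 := by
      rcases le_total L 0 with h | h
      · exact ⟨1, Or.inl rfl, by linarith⟩
      · exact ⟨-1, Or.inr rfl, by linarith⟩
    refine ⟨Function.update σ a t, fun i => ?_, ?_⟩
    · by_cases h : i = a
      · subst h; simpa using ht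
      · simpa [Function.update_of_ne h] using hσ i
    · have hup : ∀ j ∈ S, Function.update σ a t j = σ j := fun j hj =>
        Function.update_of_ne (fun h : j = a => ha (h ▸ hj)) _ _
      have htt : t * t = 1 := by rcases ht with h | h <;> rw [h] <;> norm_num
      have e1 : ∑ j ∈ S, t * Function.update σ a t j * B a j = t * ∑ j ∈ S, σ j * B a j := by
        rw [Finset.mul_sum]
        exact Finset.sum_congr rfl fun j hj => by rw [hup j hj]; ring
      have e2 : ∑ i ∈ S, Function.update σ a t i * t * B i a = t * ∑ j ∈ S, σ j * B j a := by
        rw [Finset.mul_sum]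
        exact Finset.sum_congr rfl fun j hj => by rw [hup j hj]; ring
      have e3 : ∑ i ∈ S, ∑ j ∈ S, Function.update σ a t i * Function.update σ a t j * B i j =
          ∑ i ∈ S, ∑ j ∈ S, σ i * σ j * B i j :=
        Finset.sum_congr rfl fun i hi => Finset.sum_congr rfl fun j hj => by
          rw [hup i hi, hup j hj]
      have e4 : L = ∑ j ∈ S, σ j * B a j + ∑ j ∈ S, σ j * B j a := by
        rw [hL, ← Finset.sum_add_distrib]
        exact Finset.sum_congr rfl fun j _ => by ring
      simp only [Finset.sum_insert ha, Finset.sum_add_distrib, Function.update_self]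
      rw [e1, e2, e3, htt]
      rw [e4] at htL
      linarith

open Metric in
theorem bcl_torus_integrable {n : ℕ} (f : (Fin n → ℂ) → ℂ)
    (hf : Continuous fun θ : Fin n → ℝ => f (torusMap 0 (fun _ => 1) θ)) :
    TorusIntegrable f 0 (fun _ => 1) :=
  hf.continuousOn.integrableOn_compact isCompact_Icc

theorem bcl_torus_norm {n : ℕ} (θ : Fin n → ℝ) (i : Fin n) :
    ‖torusMap 0 (fun _ => 1) θ i‖ = 1 := by
  simp [torusMap, Complex.norm_exp_ofReal_mul_I]

theorem bcl_torus_cont {n : ℕ} : Continuous (torusMap (n := n) 0 (fun _ => 1)) := by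
  unfold torusMap
  fun_prop

theorem bcl_big_open (n : ℕ) (ρ : ℝ) : IsOpen {z : Fin n → ℂ | ∀ r, ‖z r‖ < ρ} := by
  have : {z : Fin n → ℂ | ∀ r, ‖z r‖ < ρ} = ⋂ r, {z : Fin n → ℂ | ‖z r‖ < ρ} := by ext; simp
  rw [this]
  exact isOpen_iInter_of_finite fun r => isOpen_lt (by fun_prop) (by fun_prop)

theorem bcl_comp_torus_cont {n : ℕ} {ρ : ℝ} (hρ : 1 < ρ) (f : (Fin n → ℂ) → ℂ)
    (hf : ContinuousOn f {z | ∀ r, ‖z r‖ < ρ}) :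
    Continuous fun θ : Fin n → ℝ => f (torusMap 0 (fun _ => 1) θ) :=
  hf.comp_continuous bcl_torus_cont fun θ r => by rw [bcl_torus_norm]; exact hρ

open Metric Complex in
theorem bcl_cauchy (n : ℕ) : ∀ {ρ : ℝ} (_ : 1 < ρ) (f : (Fin n → ℂ) → ℂ)
    (_ : DifferentiableOn ℂ f {z | ∀ r, ‖z r‖ < ρ}) (lam : Fin n → ℂ) (_ : lam ∈ Polydisk n),
    torusIntegral (fun z => (∏ i, (z i - lam i)⁻¹) * f z) 0 (fun _ => 1) =
      (2 * Real.pi * I) ^ n * f lam := by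
  induction n with
  | zero =>
    intro ρ hρ f hf lam hl
    rw [torusIntegral_dim0]
    simp [Subsingleton.elim (0 : Fin 0 → ℂ) lam]
  | succ n ih =>
    intro ρ hρ f hf lam hl
    rw [torusIntegral_succ]
    · have hcons : ∀ x : ℂ, ‖x‖ < ρ → ∀ y : Fin n → ℂ, (∀ r, ‖y r‖ < ρ) →
          (Fin.cons x y : Fin (n+1) → ℂ) ∈ {z : Fin (n+1) → ℂ | ∀ r, ‖z r‖ < ρ} := by
        intro x hx y hy r
        refine Fin.cases ?_ (fun r => ?_) r
        · simpa using hx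
        · simpa using hy r
      have hl' : (fun i : Fin n => lam i.succ) ∈ Polydisk n := fun r => hl _
      have hinner : ∀ x ∈ sphere (0 : ℂ) 1,
          torusIntegral (fun y => (∏ i, ((Fin.cons x y : Fin (n+1) → ℂ) i - lam i)⁻¹) *
            f (Fin.cons x y)) ((0 : Fin (n+1) → ℂ) ∘ Fin.succ) ((fun _ => 1) ∘ Fin.succ) =
          (x - lam 0)⁻¹ • ((2 * Real.pi * I) ^ n * f (Fin.cons x fun i => lam i.succ)) := by
        intro x hx
        have hx1 : ‖x‖ = 1 := by simpa using hx
        have h5 := ih hρ (fun y => f (Fin.cons x y)) (fun y hy => by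
          apply DifferentiableAt.differentiableWithinAt
          have h6 : DifferentiableAt ℂ f (Fin.cons x y) :=
            hf.differentiableAt ((bcl_big_open _ _).mem_nhds (hcons x (by rw [hx1]; exact hρ) y hy))
          refine h6.comp y (f := fun y => (Fin.cons x y : Fin (n+1) → ℂ)) ?_
          rw [differentiableAt_pi]
          intro r
          refine Fin.cases ?_ (fun r => ?_) r
          · simp
          · simp only [Fin.cons_succ]; fun_prop) _ hl'
        rw [← h5, smul_eq_mul, ← torusIntegral_const_mul]
        congr 1
        funext y
        rw [Fin.prod_univ_succ]
        simp only [Fin.cons_zero, Fin.cons_succ]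
        ring
      rw [Pi.zero_apply, circleIntegral.integral_congr (by simp) hinner]
      have hd : DifferentiableOn ℂ (fun x => (2 * Real.pi * I) ^ n *
          f (Fin.cons x fun i => lam i.succ)) (closedBall 0 1) := by
        intro x hx
        apply DifferentiableAt.differentiableWithinAt
        have hx1 : ‖x‖ ≤ 1 := by simpa using hx
        have h6 : DifferentiableAt ℂ f (Fin.cons x fun i => lam i.succ) :=
          hf.differentiableAt ((bcl_big_open _ _).mem_nhds (hcons x (by linarith) _
            (fun r => (hl' r).trans hρ)))
        have h7 : DifferentiableAt ℂ (fun x : ℂ => f (Fin.cons x fun i => lam i.succ)) x := by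
          refine h6.comp x (f := fun x => (Fin.cons x fun i => lam i.succ : Fin (n+1) → ℂ)) ?_
          rw [differentiableAt_pi]
          intro r
          refine Fin.cases ?_ (fun r => ?_) r
          · simp
          · simp
        exact h7.const_mul _
      have h8 := hd.circleIntegral_sub_inv_smul (w := lam 0) (by simpa using hl 0)
      refine h8.trans ?_
      have h9 : (Fin.cons (lam 0) fun i => lam i.succ : Fin (n+1) → ℂ) = lam :=
        Fin.cons_self_tail lam
      rw [h9, smul_eq_mul, pow_succ]
      ring
    · apply bcl_torus_integrable
      refine Continuous.mul ?_ (bcl_comp_torus_cont hρ f hf.continuousOn)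
      refine continuous_finsetProd _ fun i _ => Continuous.inv₀ ?_ fun θ => ?_
      · exact ((continuous_apply i).comp bcl_torus_cont).sub continuous_const
      · intro h
        have h3 := bcl_torus_norm θ i
        rw [sub_eq_zero.1 h] at h3
        exact absurd h3 (hl i).ne

/-- integral over the unit torus -/
noncomputable def bclI {n : ℕ} (h : (Fin n → ℂ) → ℂ) : ℂ :=
  ∫ θ in Set.Icc (0 : Fin n → ℝ) (fun _ => 2 * Real.pi), h (torusMap 0 (fun _ => 1) θ)

theorem bcl_repr {n : ℕ} {ρ : ℝ} (hρ : 1 < ρ) (f : (Fin n → ℂ) → ℂ)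
    (hf : DifferentiableOn ℂ f {z | ∀ r, ‖z r‖ < ρ}) (lam : Fin n → ℂ) (hl : lam ∈ Polydisk n) :
    bclI (fun z => f z * starRingEnd ℂ (szegoKernel z lam)) = (2 * Real.pi : ℂ) ^ n * f lam := by
  have h1 := bcl_cauchy n hρ f hf lam hl
  have h2 : torusIntegral (fun z => (∏ i, (z i - lam i)⁻¹) * f z) 0 (fun _ => 1) =
      Complex.I ^ n * bclI (fun z => f z * starRingEnd ℂ (szegoKernel z lam)) := by
    unfold torusIntegral bclI
    rw [← MeasureTheory.integral_const_mul]
    congr 1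
    funext θ
    set z := torusMap (n := n) 0 (fun _ => 1) θ with hz
    have hzi : ∀ i, ((1 : ℝ) : ℂ) * Complex.exp (θ i * Complex.I) * Complex.I = z i * Complex.I := by
      intro i; simp [hz, torusMap]
    have key : ∀ i, z i * Complex.I * (z i - lam i)⁻¹ =
        Complex.I * starRingEnd ℂ ((1 - z i * starRingEnd ℂ (lam i))⁻¹) := by
      intro i
      have hn : ‖z i‖ = 1 := bcl_torus_norm θ i
      have h3 : z i * starRingEnd ℂ (z i) = 1 := by
        rw [Complex.mul_conj, Complex.normSq_eq_norm_sq, hn]; simp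
      have h4 : z i - lam i = z i * (1 - starRingEnd ℂ (z i) * lam i) := by
        linear_combination lam i * h3
      have h5 : z i ≠ 0 := by intro h; rw [h] at hn; simp at hn
      rw [h4, mul_inv, map_inv₀, map_sub, map_mul, map_one, Complex.conj_conj]
      field_simp
    simp only [hzi, smul_eq_mul]
    rw [← mul_assoc, ← Finset.prod_mul_distrib, Finset.prod_congr rfl (fun i _ => key i),
      Finset.prod_mul_distrib, ← map_prod]
    simp only [Finset.prod_const, Finset.card_univ, Fintype.card_fin, szegoKernel]
    ring
  rw [h2, mul_pow, mul_comm ((2 * Real.pi : ℂ) ^ n), mul_assoc] at h1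
  exact mul_left_cancel₀ (pow_ne_zero _ Complex.I_ne_zero) h1

theorem bcl_kernel_diff {n : ℕ} {ρ : ℝ} (lam : Fin n → ℂ) (h : ∀ r, ρ * ‖lam r‖ < 1) :
    DifferentiableOn ℂ (fun z => szegoKernel z lam) {z | ∀ r, ‖z r‖ < ρ} := by
  intro z hz
  apply DifferentiableAt.differentiableWithinAt
  unfold szegoKernel
  apply bcl_diff_prod
  intro r _
  refine DifferentiableAt.inv (by fun_prop) ?_
  intro h0
  have h1 : z r * starRingEnd ℂ (lam r) = 1 := (sub_eq_zero.1 h0).symm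
  have h2 : ‖z r‖ * ‖lam r‖ = 1 := by rw [← RCLike.norm_conj (lam r), ← norm_mul, h1, norm_one]
  have h3 := mul_le_mul_of_nonneg_right (hz r).le (norm_nonneg (lam r))
  linarith [h r]

/-- finite kernel combination -/
noncomputable def bclF {n : ℕ} (lam : ℕ → Fin n → ℂ) (S : Finset ℕ) (c : ℕ → ℂ)
    (z : Fin n → ℂ) : ℂ := ∑ j ∈ S, c j * szegoKernel z (lam j)

theorem bcl_F_diff {n : ℕ} {ρ : ℝ} (lam : ℕ → Fin n → ℂ) (S : Finset ℕ) (c : ℕ → ℂ)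
    (h : ∀ j ∈ S, ∀ r, ρ * ‖lam j r‖ < 1) :
    DifferentiableOn ℂ (bclF lam S c) {z | ∀ r, ‖z r‖ < ρ} := by
  unfold bclF
  exact DifferentiableOn.fun_sum fun j hj => (bcl_kernel_diff (lam j) (h j hj)).const_mul _

theorem bcl_int {n : ℕ} (h : (Fin n → ℂ) → ℂ)
    (hc : Continuous fun θ : Fin n → ℝ => h (torusMap 0 (fun _ => 1) θ)) :
    MeasureTheory.IntegrableOn (fun θ : Fin n → ℝ => h (torusMap 0 (fun _ => 1) θ))
      (Set.Icc (0 : Fin n → ℝ) (fun _ => 2 * Real.pi)) :=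
  hc.continuousOn.integrableOn_compact isCompact_Icc

theorem bcl_repr_F {n : ℕ} {ρ : ℝ} (hρ : 1 < ρ) (f : (Fin n → ℂ) → ℂ)
    (hf : DifferentiableOn ℂ f {z | ∀ r, ‖z r‖ < ρ}) (lam : ℕ → Fin n → ℂ)
    (hl : ∀ j, lam j ∈ Polydisk n) (S : Finset ℕ) (c : ℕ → ℂ)
    (h : ∀ j ∈ S, ∀ r, ρ * ‖lam j r‖ < 1) :
    bclI (fun z => f z * starRingEnd ℂ (bclF lam S c z)) =
      (2 * Real.pi : ℂ) ^ n * ∑ j ∈ S, starRingEnd ℂ (c j) * f (lam j) := by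
  have h1 : ∀ z, f z * starRingEnd ℂ (bclF lam S c z) =
      ∑ j ∈ S, starRingEnd ℂ (c j) * (f z * starRingEnd ℂ (szegoKernel z (lam j))) := by
    intro z
    rw [bclF, map_sum, Finset.mul_sum]
    refine Finset.sum_congr rfl fun j _ => ?_
    rw [map_mul]; ring
  simp only [h1]
  unfold bclI
  rw [MeasureTheory.integral_finsetSum, Finset.mul_sum]
  · refine Finset.sum_congr rfl fun j hj => ?_
    rw [MeasureTheory.integral_const_mul]
    have := bcl_repr hρ f hf (lam j) (hl j)
    unfold bclI at this
    rw [this]; ring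
  · intro j hj
    refine bcl_int (fun z => starRingEnd ℂ (c j) * (f z * starRingEnd ℂ (szegoKernel z (lam j)))) ?_
    refine continuous_const.mul ((bcl_comp_torus_cont hρ f hf.continuousOn).mul ?_)
    exact Complex.continuous_conj.comp
      (bcl_comp_torus_cont hρ _ (bcl_kernel_diff (lam j) (h j hj)).continuousOn)

/-- quadratic form -/
noncomputable def bclQ {n : ℕ} (lam : ℕ → Fin n → ℂ) (S : Finset ℕ) (c : ℕ → ℂ) : ℂ :=
  ∑ j ∈ S, starRingEnd ℂ (c j) * bclF lam S c (lam j)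

theorem bcl_rho {n : ℕ} (lam : ℕ → Fin n → ℂ)
    (hl : ∀ j, lam j ∈ Polydisk n) (S : Finset ℕ) (t : ℝ) (ht : t < 1) :
    ∃ ρ : ℝ, 1 < ρ ∧ ρ * t < 1 ∧ ∀ j ∈ S, ∀ r, ρ * ‖lam j r‖ < 1 := by
  have gen : ∀ x : ℝ, x < 1 → ∀ᶠ ρ in nhdsWithin (1:ℝ) (Set.Ioi 1), ρ * x < 1 := by
    intro x hx
    apply eventually_nhdsWithin_of_eventually_nhds
    have : ContinuousAt (fun ρ : ℝ => ρ * x) 1 := by fun_prop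
    exact this.eventually_lt continuousAt_const (by simpa using hx)
  have e2 : ∀ᶠ ρ in nhdsWithin (1:ℝ) (Set.Ioi 1), ∀ j ∈ S, ∀ r, ρ * ‖lam j r‖ < 1 := by
    rw [Filter.eventually_all_finset]
    intro j _
    rw [Filter.eventually_all]
    exact fun r => gen _ (hl j r)
  have e3 : ∀ᶠ ρ in nhdsWithin (1:ℝ) (Set.Ioi 1), (1:ℝ) < ρ := eventually_mem_nhdsWithin
  obtain ⟨ρ, h⟩ := (e3.and ((gen t ht).and e2)).exists
  exact ⟨ρ, h⟩

/-- real integral of the squared modulus -/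
noncomputable def bclN {n : ℕ} (h : (Fin n → ℂ) → ℂ) : ℝ :=
  ∫ θ in Set.Icc (0 : Fin n → ℝ) (fun _ => 2 * Real.pi), ‖h (torusMap 0 (fun _ => 1) θ)‖ ^ 2

theorem bcl_Q_eq {n : ℕ} (lam : ℕ → Fin n → ℂ)
    (hl : ∀ j, lam j ∈ Polydisk n) (S : Finset ℕ) (c : ℕ → ℂ) :
    (bclN (bclF lam S c) : ℂ) = (2 * Real.pi : ℂ) ^ n * bclQ lam S c := by
  obtain ⟨ρ, hρ, -, h⟩ := bcl_rho lam hl S 0 one_pos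
  rw [bclQ, ← bcl_repr_F hρ _ (bcl_F_diff lam S c h) lam hl S c h, bclN, bclI,
    ← integral_complex_ofReal]
  congr 1
  funext θ
  simp only [Complex.mul_conj, Complex.normSq_eq_norm_sq]

theorem bcl_ineq_t {n : ℕ} (lam : ℕ → Fin n → ℂ)
    (hl : ∀ j, lam j ∈ Polydisk n) (S : Finset ℕ) (c : ℕ → ℂ) (M : ℝ)
    (φ : (Fin n → ℂ) → ℂ) (hφ : DifferentiableOn ℂ φ (Polydisk n))
    (hM : ∀ z ∈ Polydisk n, ‖φ z‖ ≤ M) (t : ℝ) (ht0 : 0 < t) (ht : t < 1) :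
    (bclQ lam S (fun j => c j * starRingEnd ℂ (φ ((t : ℂ) • lam j)))).re ≤
      M ^ 2 * (bclQ lam S c).re := by
  obtain ⟨ρ, hρ, hρt, h⟩ := bcl_rho lam hl S t ht
  set b : ℕ → ℂ := fun j => φ ((t : ℂ) • lam j) with hb
  set c' : ℕ → ℂ := fun j => c j * starRingEnd ℂ (b j) with hc'
  have hmem : ∀ z ∈ {z : Fin n → ℂ | ∀ r, ‖z r‖ < ρ}, (t : ℂ) • z ∈ Polydisk n := by
    intro z hz r
    have : ‖((t : ℂ) • z) r‖ = t * ‖z r‖ := by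
      simp [abs_of_pos ht0]
    rw [this]
    nlinarith [hz r]
  have hφt : DifferentiableOn ℂ (fun z => φ ((t : ℂ) • z)) {z | ∀ r, ‖z r‖ < ρ} := by
    refine hφ.comp (f := fun z => (t : ℂ) • z) ?_ hmem
    fun_prop
  have hF := bcl_F_diff lam S c h
  have hG := bcl_F_diff lam S c' h
  have h1 := bcl_repr_F hρ _ (hφt.mul hG) lam hl S c h
  have h2 := bcl_Q_eq lam hl S c'
  have h3 : bclI (fun z => (φ ((t : ℂ) • z) * bclF lam S c' z) * starRingEnd ℂ (bclF lam S c z)) =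
      (bclN (bclF lam S c') : ℂ) := by
    rw [h2]
    refine h1.trans ?_
    congr 1
    refine Finset.sum_congr rfl fun j _ => ?_
    simp only [hc', map_mul, Complex.conj_conj, Pi.mul_apply, hb]
    ring
  have cF := bcl_comp_torus_cont hρ _ hF.continuousOn
  have cG := bcl_comp_torus_cont hρ _ hG.continuousOn
  have cφ := bcl_comp_torus_cont hρ _ hφt.continuousOn
  have hle : bclN (bclF lam S c') ≤ ∫ θ in Set.Icc (0 : Fin n → ℝ) (fun _ => 2 * Real.pi),
      ((1/2) * ‖bclF lam S c' (torusMap 0 (fun _ => 1) θ)‖ ^ 2 +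
        (M ^ 2 / 2) * ‖bclF lam S c (torusMap 0 (fun _ => 1) θ)‖ ^ 2) := by
    have h4 : ‖(bclN (bclF lam S c') : ℂ)‖ = bclN (bclF lam S c') := by
      rw [Complex.norm_real, Real.norm_of_nonneg]
      exact MeasureTheory.integral_nonneg fun θ => by positivity
    rw [← h4, ← h3]
    unfold bclI
    refine MeasureTheory.norm_integral_le_of_norm_le ?_ ?_
    · refine ContinuousOn.integrableOn_compact isCompact_Icc (Continuous.continuousOn ?_)
      fun_prop
    · refine Filter.Eventually.of_forall fun θ => ?_
      set z := torusMap (n := n) 0 (fun _ => 1) θ with hz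
      have hzm : (t : ℂ) • z ∈ Polydisk n := hmem z fun r => by
        rw [bcl_torus_norm]; exact hρ
      have h5 := hM _ hzm
      rw [norm_mul, norm_mul, RCLike.norm_conj]
      have h6 : ‖φ ((t : ℂ) • z)‖ * (‖bclF lam S c' z‖ * ‖bclF lam S c z‖) ≤
          M * (‖bclF lam S c' z‖ * ‖bclF lam S c z‖) :=
        mul_le_mul_of_nonneg_right h5 (by positivity)
      nlinarith [sq_nonneg (‖bclF lam S c' z‖ - M * ‖bclF lam S c z‖)]
  rw [MeasureTheory.integral_add, MeasureTheory.integral_const_mul,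
    MeasureTheory.integral_const_mul] at hle
  · change bclN (bclF lam S c') ≤ 1/2 * bclN (bclF lam S c') + M^2/2 * bclN (bclF lam S c) at hle
    have e1 : bclN (bclF lam S c') = (2 * Real.pi) ^ n * (bclQ lam S c').re := by
      have := congrArg Complex.re h2
      rw [show (2 * Real.pi : ℂ) ^ n = ((2 * Real.pi : ℝ) ^ n : ℝ) by push_cast; rfl,
        Complex.re_ofReal_mul, Complex.ofReal_re] at this
      exact this
    have e2 : bclN (bclF lam S c) = (2 * Real.pi) ^ n * (bclQ lam S c).re := by
      have := congrArg Complex.re (bcl_Q_eq lam hl S c)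
      rw [show (2 * Real.pi : ℂ) ^ n = ((2 * Real.pi : ℝ) ^ n : ℝ) by push_cast; rfl,
        Complex.re_ofReal_mul, Complex.ofReal_re] at this
      exact this
    have hV : (0:ℝ) < (2 * Real.pi) ^ n := by positivity
    have h7 : (2 * Real.pi) ^ n * (bclQ lam S c').re ≤
        (2 * Real.pi) ^ n * (M ^ 2 * (bclQ lam S c).re) := by
      rw [e1, e2] at hle
      linarith
    exact le_of_mul_le_mul_left h7 hV
  · refine ContinuousOn.integrableOn_compact isCompact_Icc (Continuous.continuousOn ?_)
    fun_prop
  · refine ContinuousOn.integrableOn_compact isCompact_Icc (Continuous.continuousOn ?_)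
    fun_prop

theorem bcl_Q_norm {n : ℕ} (lam : ℕ → Fin n → ℂ)
    (hl : ∀ j, lam j ∈ Polydisk n) (S : Finset ℕ) (c : ℕ → ℂ) :
    ‖bclQ lam S c‖ = (bclQ lam S c).re := by
  have hV : (0:ℝ) < (2 * Real.pi) ^ n := by positivity
  have h0 : 0 ≤ bclN (bclF lam S c) := MeasureTheory.integral_nonneg fun θ => by positivity
  have h1 : bclQ lam S c = ((bclN (bclF lam S c) / (2 * Real.pi) ^ n : ℝ) : ℂ) := by
    have := bcl_Q_eq lam hl S c
    push_cast
    rw [this, mul_div_cancel_left₀]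
    have : ((2 * Real.pi) ^ n : ℂ) = (((2 * Real.pi) ^ n : ℝ) : ℂ) := by push_cast; rfl
    rw [this]
    exact_mod_cast hV.ne'
  rw [h1, Complex.norm_real, Complex.ofReal_re, Real.norm_of_nonneg (by positivity)]

theorem bcl_ineq {n : ℕ} (lam : ℕ → Fin n → ℂ)
    (hl : ∀ j, lam j ∈ Polydisk n) (S : Finset ℕ) (c : ℕ → ℂ) (M : ℝ)
    (φ : (Fin n → ℂ) → ℂ) (hφ : DifferentiableOn ℂ φ (Polydisk n))
    (hM : ∀ z ∈ Polydisk n, ‖φ z‖ ≤ M) :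
    (bclQ lam S (fun j => c j * starRingEnd ℂ (φ (lam j)))).re ≤ M ^ 2 * (bclQ lam S c).re := by
  have hb : ∀ j, Filter.Tendsto (fun t : ℝ => φ ((t : ℂ) • lam j)) (nhdsWithin 1 (Set.Iio 1))
      (nhds (φ (lam j))) := by
    intro j
    have h1 : ContinuousAt φ (lam j) :=
      (hφ.differentiableAt ((bcl_isOpen n).mem_nhds (hl j))).continuousAt
    have h2 : Filter.Tendsto (fun t : ℝ => (t : ℂ) • lam j) (nhds 1) (nhds (lam j)) := by
      have h3 : Continuous (fun t : ℝ => (t : ℂ) • lam j) := by fun_prop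
      have := h3.tendsto 1
      simpa using this
    exact h1.tendsto.comp (h2.mono_left nhdsWithin_le_nhds)
  have hlim : Filter.Tendsto
      (fun t : ℝ => (bclQ lam S (fun j => c j * starRingEnd ℂ (φ ((t : ℂ) • lam j)))).re)
      (nhdsWithin 1 (Set.Iio 1))
      (nhds (bclQ lam S (fun j => c j * starRingEnd ℂ (φ (lam j)))).re) := by
    refine (Complex.continuous_re.tendsto _).comp ?_
    unfold bclQ bclF
    have hcj : ∀ j, Filter.Tendsto (fun t : ℝ => c j * starRingEnd ℂ (φ ((t : ℂ) • lam j)))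
        (nhdsWithin 1 (Set.Iio 1)) (nhds (c j * starRingEnd ℂ (φ (lam j)))) := fun j =>
      tendsto_const_nhds.mul ((Complex.continuous_conj.tendsto _).comp (hb j))
    refine tendsto_finsetSum _ fun j _ => ?_
    refine Filter.Tendsto.mul ((Complex.continuous_conj.tendsto _).comp (hcj j)) ?_
    exact tendsto_finsetSum _ fun i _ => (hcj i).mul tendsto_const_nhds
  refine le_of_tendsto hlim ?_
  have e1 : ∀ᶠ t in nhdsWithin (1:ℝ) (Set.Iio 1), t < 1 := eventually_mem_nhdsWithin
  have e2 : ∀ᶠ t in nhdsWithin (1:ℝ) (Set.Iio 1), 0 < t :=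
    eventually_nhdsWithin_of_eventually_nhds (lt_mem_nhds one_pos)
  filter_upwards [e1, e2] with t h1 h2
  exact bcl_ineq_t lam hl S c M φ hφ hM t h2 h1

theorem bcl_weak {d : ℕ} (lam : ℕ → Fin d → ℂ) (hlam : ∀ i, lam i ∈ Polydisk d) (M : ℝ) (hM : 0 < M)
    (h : ∀ w : ℕ → ℂ, (∀ i, ‖w i‖ ≤ 1) →
      ∃ φ : (Fin d → ℂ) → ℂ, DifferentiableOn ℂ φ (Polydisk d) ∧
        (∀ z ∈ Polydisk d, ‖φ z‖ ≤ M) ∧ ∀ i, φ (lam i) = w i) (i j : ℕ) (hij : i ≠ j) :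
    1 / M ≤ gleasonDist (lam i) (lam j) := by
  obtain ⟨φ, hφ, hb, hv⟩ := h (fun k => if k = i then 1 else 0) (fun k => by
    split_ifs <;> simp)
  refine le_csSup ⟨1, ?_⟩ ⟨fun z => φ z / M, by simpa only [div_eq_mul_inv] using hφ.mul_const ((M : ℂ)⁻¹), ?_, ?_, ?_⟩
  · rintro x ⟨ψ, -, h1, -, rfl⟩
    exact h1 _ (hlam i)
  · intro z hz
    rw [norm_div, Complex.norm_real, Real.norm_of_nonneg hM.le]
    exact div_le_one_of_le₀ (hb z hz) hM.le
  · simp [hv, hij.symm]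
  · simp [hv, abs_of_pos hM]

theorem bcl_kernel_diag {d : ℕ} (l : Fin d → ℂ) (hl : l ∈ Polydisk d) :
    0 < (szegoKernel l l).re ∧ szegoKernel l l = ((szegoKernel l l).re : ℂ) := by
  have h : szegoKernel l l = ((∏ r, (1 - ‖l r‖ ^ 2)⁻¹ : ℝ) : ℂ) := by
    unfold szegoKernel
    push_cast
    refine Finset.prod_congr rfl fun r _ => ?_
    rw [Complex.mul_conj, Complex.normSq_eq_norm_sq]
    push_cast; rfl
  constructor
  · rw [h, Complex.ofReal_re]
    refine Finset.prod_pos fun r _ => inv_pos.2 ?_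
    have := hl r
    nlinarith [norm_nonneg (l r)]
  · rw [h, Complex.ofReal_re]

theorem bcl_gram {d : ℕ} (lam : ℕ → Fin d → ℂ) (hlam : ∀ i, lam i ∈ Polydisk d) (M : ℝ)
    (h : ∀ w : ℕ → ℂ, (∀ i, ‖w i‖ ≤ 1) →
      ∃ φ : (Fin d → ℂ) → ℂ, DifferentiableOn ℂ φ (Polydisk d) ∧
        (∀ z ∈ Polydisk d, ‖φ z‖ ≤ M) ∧ ∀ i, φ (lam i) = w i) (S : Finset ℕ) (a : ℕ → ℂ) :
    ‖∑ i ∈ S, ∑ j ∈ S, a i * starRingEnd ℂ (a j) *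
              (szegoKernel (lam i) (lam j) /
                (Real.sqrt ((szegoKernel (lam i) (lam i)).re *
                  (szegoKernel (lam j) (lam j)).re) : ℂ))‖ ≤ M ^ 2 * ∑ i ∈ S, ‖a i‖ ^ 2 := by
  set K : ℕ → ℝ := fun i => (szegoKernel (lam i) (lam i)).re with hK
  have hKpos : ∀ i, 0 < K i := fun i => (bcl_kernel_diag _ (hlam i)).1
  have hKeq : ∀ i, szegoKernel (lam i) (lam i) = (K i : ℂ) := fun i =>
    (bcl_kernel_diag _ (hlam i)).2
  set c : ℕ → ℂ := fun i => starRingEnd ℂ (a i) / (Real.sqrt (K i) : ℂ) with hc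
  have hQ : ∑ i ∈ S, ∑ j ∈ S, a i * starRingEnd ℂ (a j) *
      (szegoKernel (lam i) (lam j) / (Real.sqrt (K i * K j) : ℂ)) = bclQ lam S c := by
    unfold bclQ bclF
    refine Finset.sum_congr rfl fun i _ => ?_
    rw [Finset.mul_sum]
    refine Finset.sum_congr rfl fun j _ => ?_
    rw [Real.sqrt_mul (hKpos i).le]
    simp only [hc, map_div₀, Complex.conj_conj, Complex.conj_ofReal]
    push_cast
    ring
  change ‖∑ i ∈ S, ∑ j ∈ S, a i * starRingEnd ℂ (a j) *
      (szegoKernel (lam i) (lam j) / (Real.sqrt (K i * K j) : ℂ))‖ ≤ _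
  rw [hQ, bcl_Q_norm lam hlam]
  set B : ℕ → ℕ → ℝ := fun i j =>
    (starRingEnd ℂ (c i) * (c j * szegoKernel (lam i) (lam j))).re with hB
  obtain ⟨σ, hσ, hs⟩ := bcl_signs B S
  have hσσ : ∀ i, σ i * σ i = 1 := fun i => by rcases hσ i with h | h <;> rw [h] <;> norm_num
  obtain ⟨φ, hφ, hb, hv⟩ := h (fun i => (σ i : ℂ)) (fun i => by
    rcases hσ i with h | h <;> simp [h])
  have h1 := bcl_ineq lam hlam S (fun i => c i * (σ i : ℂ)) M φ hφ hb
  have h2 : (fun j => c j * (σ j : ℂ) * starRingEnd ℂ (φ (lam j))) = c := by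
    funext j
    rw [hv, Complex.conj_ofReal, mul_assoc, ← Complex.ofReal_mul, hσσ]
    simp
  rw [h2] at h1
  have h3 : (bclQ lam S (fun i => c i * (σ i : ℂ))).re =
      ∑ i ∈ S, ∑ j ∈ S, σ i * σ j * B i j := by
    unfold bclQ bclF
    rw [Complex.re_sum]
    refine Finset.sum_congr rfl fun i _ => ?_
    rw [Finset.mul_sum, Complex.re_sum]
    refine Finset.sum_congr rfl fun j _ => ?_
    rw [hB, ← Complex.re_ofReal_mul]
    congr 1
    rw [map_mul, Complex.conj_ofReal]
    push_cast
    ring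
  have h4 : ∀ i, B i i = ‖a i‖ ^ 2 := by
    intro i
    have hsq : (Real.sqrt (K i) : ℂ) * Real.sqrt (K i) = (K i : ℂ) := by
      rw [← Complex.ofReal_mul, Real.mul_self_sqrt (hKpos i).le]
    have hne : (Real.sqrt (K i) : ℂ) ≠ 0 := by
      exact_mod_cast (Real.sqrt_pos.2 (hKpos i)).ne'
    have : starRingEnd ℂ (c i) * (c i * szegoKernel (lam i) (lam i)) = ((‖a i‖ ^ 2 : ℝ) : ℂ) := by
      rw [hKeq, ← hsq]
      simp only [hc, map_div₀, Complex.conj_conj, Complex.conj_ofReal]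
      rw [← Complex.normSq_eq_norm_sq, ← Complex.mul_conj]
      field_simp
    rw [hB]
    simp only [this, Complex.ofReal_re]
  rw [h3] at h1
  simp only [h4] at hs
  exact h1.trans (mul_le_mul_of_nonneg_left hs (sq_nonneg M))

/-- **Berndtsson–Chang–Lin.** For a sequence of distinct points in `𝔻^d` (`d ≥ 2`):
(1) a uniform lower bound `ε` on the products `∏_{j≠i} ρ(λᵢ,λⱼ)` of Gleason distances
implies (2) the sequence is interpolating for `H^∞(𝔻^d)`, which in turn implies
(3) weak separation together with boundedness of the Szegő Grammian on `ℓ²`. -/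
theorem berndtsson_chang_lin {d : ℕ} (hd : 2 ≤ d) (lam : ℕ → Fin d → ℂ)
    (hlam : ∀ i, lam i ∈ Polydisk d) (hdist : Function.Injective lam) :
    ((∃ ε > (0:ℝ), ∀ i : ℕ, ∀ F : Finset ℕ, i ∉ F →
        ε ≤ ∏ j ∈ F, gleasonDist (lam i) (lam j)) →
      (∀ w : ℕ → ℂ, (∃ Cw : ℝ, ∀ i, ‖w i‖ ≤ Cw) →
        ∃ φ : (Fin d → ℂ) → ℂ, DifferentiableOn ℂ φ (Polydisk d) ∧
          (∃ Cφ : ℝ, ∀ z ∈ Polydisk d, ‖φ z‖ ≤ Cφ) ∧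
          ∀ i, φ (lam i) = w i)) ∧
    ((∀ w : ℕ → ℂ, (∃ Cw : ℝ, ∀ i, ‖w i‖ ≤ Cw) →
        ∃ φ : (Fin d → ℂ) → ℂ, DifferentiableOn ℂ φ (Polydisk d) ∧
          (∃ Cφ : ℝ, ∀ z ∈ Polydisk d, ‖φ z‖ ≤ Cφ) ∧
          ∀ i, φ (lam i) = w i) →
      ((∃ ε > (0:ℝ), ∀ i j : ℕ, i ≠ j → ε ≤ gleasonDist (lam i) (lam j)) ∧
        ∃ M > (0:ℝ), ∀ (F : Finset ℕ) (a : ℕ → ℂ),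
          ‖∑ i ∈ F, ∑ j ∈ F, a i * starRingEnd ℂ (a j) *
              (szegoKernel (lam i) (lam j) /
                (Real.sqrt ((szegoKernel (lam i) (lam i)).re *
                  (szegoKernel (lam j) (lam j)).re) : ℂ))‖ ≤
            M * ∑ i ∈ F, ‖a i‖ ^ 2)) := by
  refine ⟨fun ⟨ε, hε, h1⟩ w ⟨Cw, hw⟩ => ?_, fun h2 => ?_⟩
  · exact bcl_one_two (by omega) lam hlam hdist hε h1 w Cw hw
  · obtain ⟨M, hM, h⟩ := bcl_uniform lam hlam h2
    exact ⟨⟨1 / M, by positivity, fun i j hij => bcl_weak lam hlam M hM h i j hij⟩,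
      M ^ 2, by positivity, fun F a => bcl_gram lam hlam M h F a⟩
end
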